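/- (Prolate spheroidal single layer potential, exterior evaluation.) Fix a > 0, u₀ > 1, and integers n ≥ 0, 0 ≤ m ≤ n. Let the density be σ(s,t) = Y_n^m(s,t)/√(u₀^2−s^2). Then for every exterior target point x = Φ(u,v,φ) with u > u₀, v ∈ (−1,1), φ ∈ ℝ, the single layer potential satisfies S[σ](x) = a·((n−m)!/(n+m)!)·(−1)^m·√(u₀^2−1)·P_n^m(u₀)·Q_n^m(u)·Y_n^m(v,φ). -/

import Mathlib

noncomputable section

open Real MeasureTheory

/-- Legendre polynomial via Rodrigues' formula. -/
def legendreP (n : ℕ) (x : ℝ) : ℝ :=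
  (1 / (2 ^ n * (n.factorial : ℝ))) * iteratedDeriv n (fun y : ℝ => (y ^ 2 - 1) ^ n) x

/-- Legendre function of the second kind (Neumann's integral), for `x > 1`. -/
def legendreQ (n : ℕ) (x : ℝ) : ℝ :=
  (1 / 2) * ∫ t in (-1 : ℝ)..1, legendreP n t / (x - t)

/-- Associated Legendre function of the first kind, off the cut (`x > 1`). -/
def assocP (n m : ℕ) (x : ℝ) : ℝ :=
  Real.sqrt (x ^ 2 - 1) ^ m * iteratedDeriv m (legendreP n) x

/-- Associated Legendre function of the second kind, off the cut (`x > 1`). -/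
def assocQ (n m : ℕ) (x : ℝ) : ℝ :=
  Real.sqrt (x ^ 2 - 1) ^ m * iteratedDeriv m (legendreQ n) x

/-- Ferrers function of the first kind, on the cut (`-1 ≤ v ≤ 1`). -/
def ferrersP (n m : ℕ) (v : ℝ) : ℝ :=
  Real.sqrt (1 - v ^ 2) ^ m * iteratedDeriv m (legendreP n) v

/-- Prolate spheroidal coordinate map. -/
def prolate (a u v φ : ℝ) : EuclideanSpace ℝ (Fin 3) :=
  (WithLp.equiv 2 (Fin 3 → ℝ)).symm
    ![a * Real.sqrt (u ^ 2 - 1) * Real.sqrt (1 - v ^ 2) * Real.cos φ,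
      a * Real.sqrt (u ^ 2 - 1) * Real.sqrt (1 - v ^ 2) * Real.sin φ,
      a * u * v]

/-- Surface spheroidal (= spherical) harmonic `Y_n^m(v, φ)`. -/
def sphY (n m : ℕ) (v φ : ℝ) : ℂ :=
  ((Real.sqrt ((2 * (n : ℝ) + 1) / (4 * Real.pi)) *
      Real.sqrt (((n - m).factorial : ℝ) / ((n + m).factorial : ℝ)) * ferrersP n m v : ℝ) : ℂ) *
    Complex.exp (Complex.I * m * φ)

/-- Outward unit normal on the prolate spheroid `u = u₀`, at surface parameters `(s, t)`. -/
def unitNormalP (a u₀ s t : ℝ) : EuclideanSpace ℝ (Fin 3) :=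
  ‖deriv (fun w => prolate a w s t) u₀‖⁻¹ • deriv (fun w => prolate a w s t) u₀

/-- Surface area element on the prolate spheroid `u = u₀`. -/
def areaElemP (a u₀ s : ℝ) : ℝ := a ^ 2 * Real.sqrt (u₀ ^ 2 - s ^ 2) * Real.sqrt (u₀ ^ 2 - 1)

/-- Laplace single layer potential on the prolate spheroid `u = u₀`. -/
def singleLayerP (a u₀ : ℝ) (σ : ℝ → ℝ → ℂ) (x : EuclideanSpace ℝ (Fin 3)) : ℂ :=
  ∫ t in (0 : ℝ)..(2 * Real.pi), ∫ s in (-1 : ℝ)..1,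
    ((areaElemP a u₀ s / (4 * Real.pi * ‖x - prolate a u₀ s t‖) : ℝ) : ℂ) * σ s t

/-!
Integrating out the azimuth by Jacobi's formula turns the potential of a density of azimuthal order
`m` into `(σ s)^m` times a double integral `G` in which the distance enters to the power `-(2m+1)`.
As a function of the radial coordinate of the source, the kernel of `G` satisfies the separated
Legendre equation modulo derivatives that integrate to zero, so `G` is a solution of that equation
which stays regular on the focal segment `u₀ = 1`; hence it is a multiple of `D^m P_n (u₀)`. There
the kernel is symmetric in the coordinates of the target, and the same argument in the polar
coordinate gives the factor `D^m P_n (v)`. For a source and a target on the axis of symmetry, the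
remaining integral is Neumann's integral for `D^m Q_n (u)` after `m` integrations by parts.
-/

section

open Set Filter Topology Polynomial

section ParametricIntegral

theorem hasDerivAt_setIntegral_of_isCompact {Y E : Type*} [MetricSpace Y]
    [SecondCountableTopology Y] [MeasurableSpace Y] [BorelSpace Y] [NormedAddCommGroup E]
    [NormedSpace ℝ E] {μ : Measure Y} [IsFiniteMeasureOnCompacts μ] {K : Set Y} (hK : IsCompact K)
    {U : Set ℝ} (hU : IsOpen U) {F F' : ℝ → Y → E} (hF : ∀ x ∈ U, ContinuousOn (F x) K)
    (hF' : ContinuousOn (fun q : ℝ × Y ↦ F' q.1 q.2) (U ×ˢ K))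
    (hd : ∀ x ∈ U, ∀ y ∈ K, HasDerivAt (fun x ↦ F x y) (F' x y) x) {x₀ : ℝ} (hx₀ : x₀ ∈ U) :
    HasDerivAt (fun x ↦ ∫ y in K, F x y ∂μ) (∫ y in K, F' x₀ y ∂μ) x₀ := by
  obtain ⟨ε, hε, hball⟩ := Metric.nhds_basis_closedBall.mem_iff.1 (hU.mem_nhds hx₀)
  obtain ⟨B, hB⟩ := ((isCompact_closedBall x₀ ε).prod hK).exists_bound_of_continuousOn
    (hF'.mono (prod_mono hball le_rfl))
  have hF'x : ContinuousOn (F' x₀) K :=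
    hF'.comp (f := fun y : Y ↦ (x₀, y)) (by fun_prop) fun y hy ↦ ⟨hx₀, hy⟩
  have hKm := hK.measurableSet
  have : IsFiniteMeasure (μ.restrict K) := ⟨by simpa using hK.measure_lt_top⟩
  refine (hasDerivAt_integral_of_dominated_loc_of_deriv_le (s := Metric.closedBall x₀ ε)
    (bound := fun _ ↦ B) (Metric.closedBall_mem_nhds x₀ hε) ?_ ?_ ?_ ?_ ?_ ?_).2
  · filter_upwards [hU.mem_nhds hx₀] with x hx
    exact (hF x hx).aestronglyMeasurable_of_isCompact hK hKm
  · exact (hF x₀ hx₀).integrableOn_compact hK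
  · exact hF'x.aestronglyMeasurable_of_isCompact hK hKm
  · filter_upwards [ae_restrict_mem hKm] with y hy x hx using hB (x, y) ⟨hx, hy⟩
  · exact integrable_const _
  · filter_upwards [ae_restrict_mem hKm] with y hy x hx using hd x (hball hx) y hy

variable {E : Type*} [NormedAddCommGroup E] [NormedSpace ℝ E] [CompleteSpace E] {H Φ : ℝ → ℝ → E}
  {a b c d : ℝ}

theorem setIntegral_prod_deriv_snd_eq_zero (hcd : c ≤ d) (hH : Continuous (Function.uncurry H))
    (hd : ∀ x y, HasDerivAt (fun y ↦ Φ x y) (H x y) y) (hΦ : ∀ x, Φ x c = Φ x d) :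
    ∫ z in Icc a b ×ˢ Icc c d, H z.1 z.2 = 0 := by
  rw [Measure.volume_eq_prod, setIntegral_prod (fun z ↦ H z.1 z.2)
    (hH.continuousOn.integrableOn_compact (isCompact_Icc.prod isCompact_Icc))]
  refine integral_eq_zero_of_ae (ae_of_all _ fun x ↦ ?_)
  simp only [Pi.zero_apply]
  have hcont : Continuous fun y ↦ H x y := hH.comp (by fun_prop : Continuous fun y : ℝ ↦ (x, y))
  rw [integral_Icc_eq_integral_Ioc, ← intervalIntegral.integral_of_le hcd,
    intervalIntegral.integral_eq_sub_of_hasDerivAt (fun y _ ↦ hd x y)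
      (hcont.intervalIntegrable _ _), hΦ x, sub_self]

theorem setIntegral_prod_deriv_fst_eq_zero (hab : a ≤ b) (hH : Continuous (Function.uncurry H))
    (hd : ∀ x y, HasDerivAt (fun x ↦ Φ x y) (H x y) x) (hΦ : ∀ y, Φ a y = Φ b y) :
    ∫ z in Icc a b ×ˢ Icc c d, H z.1 z.2 = 0 := by
  rw [Measure.volume_eq_prod, ← setIntegral_prod_swap (Icc a b) (Icc c d), ← Measure.volume_eq_prod]
  exact setIntegral_prod_deriv_snd_eq_zero (H := fun y x ↦ H x y) (Φ := fun y x ↦ Φ x y) hab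
    (hH.comp continuous_swap) (fun y x ↦ hd x y) hΦ

end ParametricIntegral

section SingularODE

theorem eq_zero_of_hasDerivAt_linear {E : Type*} [NormedAddCommGroup E] [NormedSpace ℝ E]
    {A : ℝ → E →L[ℝ] E} {f : ℝ → E} {a b t₀ : ℝ} (hA : ContinuousOn A (Ioo a b))
    (hf : ∀ t ∈ Ioo a b, HasDerivAt f (A t (f t)) t) (ht₀ : t₀ ∈ Ioo a b) (h₀ : f t₀ = 0) :
    ∀ t ∈ Ioo a b, f t = 0 := by
  intro t ht
  obtain ⟨lo, halo, hlo⟩ := exists_between (lt_min ht₀.1 ht.1)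
  obtain ⟨hi, hhi, hhib⟩ := exists_between (max_lt ht₀.2 ht.2)
  have hsub : Icc lo hi ⊆ Ioo a b := Icc_subset_Ioo halo hhib
  obtain ⟨K, hK⟩ := isCompact_Icc.exists_bound_of_continuousOn (hA.mono hsub)
  have hlip (s) (hs : s ∈ Ioo lo hi) : LipschitzOnWith K.toNNReal (fun x ↦ A s x) univ :=
    ((A s).lipschitz.weaken (NNReal.le_toNNReal_of_coe_le
      (hK s (Ioo_subset_Icc_self hs)))).lipschitzOnWith
  refine ODE_solution_unique_of_mem_Ioo (g := fun _ ↦ 0) (s := fun _ ↦ univ) hlip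
    ⟨(lt_min_iff.1 hlo).1, (max_lt_iff.1 hhi).1⟩
    (fun s hs ↦ ⟨hf s (hsub (Ioo_subset_Icc_self hs)), trivial⟩)
    (fun s _ ↦ ⟨by simpa using hasDerivAt_const s (0 : E), trivial⟩) h₀
    ⟨(lt_min_iff.1 hlo).2, (max_lt_iff.1 hhi).2⟩

theorem eq_left_of_hasDerivAt_zero {f : ℝ → ℝ} {a x : ℝ} (hax : a < x)
    (hf : ContinuousOn f (Icc a x)) (h : ∀ t ∈ Ioo a x, HasDerivAt f 0 t) : f x = f a := by
  obtain ⟨_, _, hslope⟩ := exists_hasDerivAt_eq_slope f 0 hax hf h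
  exact sub_eq_zero.1 ((div_eq_zero_iff.1 hslope.symm).resolve_right (sub_ne_zero.2 hax.ne'))

/-- `f` solves the Sturm–Liouville equation `(ω f')' = l ω f` on `(0, b)`, with derivative `f'`,
and `f`, `f'` extend continuously to `0`. -/
structure IsSturmLiouvilleSolution (ω : ℝ → ℝ) (l b : ℝ) (f f' : ℝ → ℝ) : Prop where
  hasDerivAt : ∀ x ∈ Ioo 0 b, HasDerivAt f (f' x) x
  hasDerivAt_weight_mul : ∀ x ∈ Ioo 0 b, HasDerivAt (fun x ↦ ω x * f' x) (l * (ω x * f x)) x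
  continuousOn : ContinuousOn f (Ico 0 b)
  continuousOn_deriv : ContinuousOn f' (Ico 0 b)

namespace IsSturmLiouvilleSolution

variable {ω f f' p p' : ℝ → ℝ} {l b : ℝ}

theorem const_mul_sub_const_mul (hf : IsSturmLiouvilleSolution ω l b f f')
    (hp : IsSturmLiouvilleSolution ω l b p p') (c d : ℝ) :
    IsSturmLiouvilleSolution ω l b (fun x ↦ c * f x - d * p x) (fun x ↦ c * f' x - d * p' x) where
  hasDerivAt x hx := ((hf.hasDerivAt x hx).const_mul c).sub ((hp.hasDerivAt x hx).const_mul d)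
  hasDerivAt_weight_mul x hx := by
    have h := ((hf.hasDerivAt_weight_mul x hx).const_mul c).sub
      ((hp.hasDerivAt_weight_mul x hx).const_mul d)
    refine (h.congr_deriv (by ring)).congr_of_eventuallyEq (.of_forall fun y ↦ ?_)
    simp only [Pi.sub_apply]
    ring
  continuousOn := (continuousOn_const.mul hf.continuousOn).sub
    (continuousOn_const.mul hp.continuousOn)
  continuousOn_deriv := (continuousOn_const.mul hf.continuousOn_deriv).sub
    (continuousOn_const.mul hp.continuousOn_deriv)

theorem wronskian_eq_zero (hω : Continuous ω) (hω₀ : ω 0 = 0)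
    (hf : IsSturmLiouvilleSolution ω l b f f') (hp : IsSturmLiouvilleSolution ω l b p p') {x : ℝ}
    (hx : x ∈ Ioo 0 b) : ω x * f' x * p x - ω x * p' x * f x = 0 := by
  have hsub : Icc 0 x ⊆ Ico 0 b := Icc_subset_Ico_right hx.2
  have hW : ContinuousOn (fun x ↦ ω x * f' x * p x - ω x * p' x * f x) (Ico 0 b) :=
    ((hω.continuousOn.mul hf.continuousOn_deriv).mul hp.continuousOn).sub
      ((hω.continuousOn.mul hp.continuousOn_deriv).mul hf.continuousOn)
  rw [eq_left_of_hasDerivAt_zero hx.1 (hW.mono hsub) fun t ht ↦ ?_]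
  · simp [hω₀]
  · have ht' : t ∈ Ioo 0 b := ⟨ht.1, ht.2.trans hx.2⟩
    exact (((hf.hasDerivAt_weight_mul t ht').mul (hp.hasDerivAt t ht')).sub
      ((hp.hasDerivAt_weight_mul t ht').mul (hf.hasDerivAt t ht'))).congr_deriv (by ring)

theorem eventually_mul_eq_mul (hb : 0 < b) (hω : Continuous ω) (hω₀ : ω 0 = 0)
    (hωpos : ∀ x ∈ Ioo 0 b, 0 < ω x) (hf : IsSturmLiouvilleSolution ω l b f f')
    (hp : IsSturmLiouvilleSolution ω l b p p') (hp₀ : p 0 ≠ 0) :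
    ∃ d ∈ Ioc 0 b, ∀ x ∈ Ioo 0 d, p 0 * f x = f 0 * p x := by
  have hne : ∀ᶠ x in 𝓝[≥] 0, p x ≠ 0 := by
    rw [← nhdsWithin_Ico_eq_nhdsGE hb]
    exact (hp.continuousOn 0 (left_mem_Ico.2 hb)).eventually_ne hp₀
  obtain ⟨d, hd₀, hd⟩ := (mem_nhdsGE_iff_exists_Ico_subset' hb).1 hne
  refine ⟨min d b, ⟨lt_min hd₀ hb, min_le_right _ _⟩, fun x hx ↦ ?_⟩
  have hxd : x < d := hx.2.trans_le (min_le_left _ _)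
  have hxb : x < b := hx.2.trans_le (min_le_right _ _)
  have hquot : f x / p x = f 0 / p 0 := by
    refine eq_left_of_hasDerivAt_zero (f := fun x ↦ f x / p x) hx.1
      ((hf.continuousOn.mono (Icc_subset_Ico_right hxb)).div
        (hp.continuousOn.mono (Icc_subset_Ico_right hxb))
        fun t ht ↦ hd ⟨ht.1, ht.2.trans_lt hxd⟩) fun t ht ↦ ?_
    have htb : t ∈ Ioo 0 b := ⟨ht.1, ht.2.trans hxb⟩
    have hW : f' t * p t - f t * p' t = 0 := by
      refine (mul_eq_zero.1 ?_).resolve_left (hωpos t htb).ne'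
      linear_combination wronskian_eq_zero hω hω₀ hf hp htb
    exact ((hf.hasDerivAt t htb).div (hp.hasDerivAt t htb)
      (hd ⟨ht.1.le, ht.2.trans hxd⟩)).congr_deriv (by rw [hW, zero_div])
  rw [div_eq_div_iff (hd ⟨hx.1.le, hxd⟩) hp₀] at hquot
  linear_combination hquot

theorem eq_zero_of_eq_zero (hω : Continuous ω) (hωpos : ∀ x ∈ Ioo 0 b, 0 < ω x)
    (hf : IsSturmLiouvilleSolution ω l b f f') {x₀ : ℝ} (hx₀ : x₀ ∈ Ioo 0 b) (h : f x₀ = 0)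
    (h' : f' x₀ = 0) : ∀ x ∈ Ioo 0 b, f x = 0 := by
  have hinv : ContinuousOn (fun t ↦ (ω t)⁻¹) (Ioo 0 b) :=
    hω.continuousOn.inv₀ fun t ht ↦ (hωpos t ht).ne'
  have hA : ContinuousOn (fun t ↦ (ω t)⁻¹ • (ContinuousLinearMap.inl ℝ ℝ ℝ ∘L .snd ℝ ℝ ℝ) +
      (l * ω t) • (ContinuousLinearMap.inr ℝ ℝ ℝ ∘L .fst ℝ ℝ ℝ)) (Ioo 0 b) := by
    fun_prop
  have hsol := eq_zero_of_hasDerivAt_linear (f := fun t ↦ (f t, ω t * f' t)) hA (fun t ht ↦ ?_) hx₀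
    (by simp [h, h'])
  · exact fun x hx ↦ congrArg Prod.fst (hsol x hx)
  · refine ((hf.hasDerivAt t ht).prodMk (hf.hasDerivAt_weight_mul t ht)).congr_deriv ?_
    simp [(hωpos t ht).ne', mul_assoc]

/-- The weight vanishes at `0`, so the Wronskian of two solutions continuous up to `0` vanishes
and they are proportional there. -/
theorem mul_eq_mul (hω : Continuous ω) (hω₀ : ω 0 = 0)
    (hωpos : ∀ x ∈ Ioo 0 b, 0 < ω x) (hf : IsSturmLiouvilleSolution ω l b f f')
    (hp : IsSturmLiouvilleSolution ω l b p p') (hp₀ : p 0 ≠ 0) {x : ℝ} (hx : x ∈ Ioo 0 b) :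
    p 0 * f x = f 0 * p x := by
  obtain ⟨d, hd, hnear⟩ := eventually_mul_eq_mul (hx.1.trans hx.2) hω hω₀ hωpos hf hp hp₀
  have hzero : ∀ y ∈ Ioo 0 d, p 0 * f y - f 0 * p y = 0 := fun y hy ↦ sub_eq_zero.2 (hnear y hy)
  have hmid : d / 2 ∈ Ioo 0 d := ⟨half_pos hd.1, half_lt_self hd.1⟩
  have hmid' : d / 2 ∈ Ioo 0 b := Ioo_subset_Ioo_right hd.2 hmid
  have hg := hf.const_mul_sub_const_mul hp (p 0) (f 0)
  have hderiv : p 0 * f' (d / 2) - f 0 * p' (d / 2) = 0 := by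
    rw [← (hg.hasDerivAt _ hmid').deriv, (EventuallyEq.deriv_eq
      (eventually_of_mem (isOpen_Ioo.mem_nhds hmid) hzero : _ =ᶠ[_] fun _ ↦ (0 : ℝ))), deriv_const]
  exact sub_eq_zero.1 (hg.eq_zero_of_eq_zero hω hωpos hmid' (hzero _ hmid) hderiv x hx)

end IsSturmLiouvilleSolution

end SingularODE

section FourierCosine

variable {F : ℕ → ℝ → ℝ}

theorem continuous_sin_pow_mul_comp_cos {f : ℝ → ℝ} (hf : ContinuousOn f (Icc (-1) 1)) (k : ℕ)
    (p : ℝ[X]) : Continuous fun θ ↦ sin θ ^ k * p.eval (cos θ) * f (cos θ) :=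
  (by fun_prop : Continuous fun θ ↦ sin θ ^ k * p.eval (cos θ)).mul
    (hf.comp_continuous continuous_cos cos_mem_Icc)

theorem integral_iterate_derivative_T_mul_succ
    (hF : ∀ k, ∀ t ∈ Icc (-1) 1, HasDerivAt (F k) (F (k + 1) t) t) (m j : ℕ) :
    ((m : ℝ) ^ 2 - (j : ℝ) ^ 2) * ∫ θ in (0)..(2 * π),
        sin θ ^ (2 * j) * (derivative^[j] (Chebyshev.T ℝ m)).eval (cos θ) * F j (cos θ) =
      ∫ θ in (0)..(2 * π), sin θ ^ (2 * (j + 1)) *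
        (derivative^[j + 1] (Chebyshev.T ℝ m)).eval (cos θ) * F (j + 1) (cos θ) := by
  set T := Chebyshev.T ℝ m
  have hcont (k : ℕ) := (continuous_sin_pow_mul_comp_cos
    (fun t ht ↦ (hF k t ht).continuousAt.continuousWithinAt) (2 * k)
    (derivative^[k] T)).intervalIntegrable (μ := volume) 0 (2 * π)
  have hderiv (θ : ℝ) : HasDerivAt
      (fun θ ↦ sin θ ^ (2 * j + 1) * (derivative^[j + 1] T).eval (cos θ) * F j (cos θ))
      (((m : ℝ) ^ 2 - (j : ℝ) ^ 2) *
          (sin θ ^ (2 * j) * (derivative^[j] T).eval (cos θ) * F j (cos θ)) -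
        sin θ ^ (2 * (j + 1)) * (derivative^[j + 1] T).eval (cos θ) * F (j + 1) (cos θ)) θ := by
    have hT := ((derivative^[j + 1] T).hasDerivAt (cos θ)).comp θ (hasDerivAt_cos θ)
    have hFcos := (hF j _ (cos_mem_Icc θ)).comp θ (hasDerivAt_cos θ)
    refine ((((hasDerivAt_sin θ).fun_pow (2 * j + 1)).fun_mul hT).fun_mul hFcos).congr_deriv ?_
    have hcheb := Chebyshev.one_sub_X_sq_mul_iterate_derivative_T_eval m j (cos θ)
    rw [← sin_sq] at hcheb
    simp only [Function.comp_apply, ← Function.iterate_succ_apply' (derivative (R := ℝ)),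
      Nat.add_sub_cancel]
    push_cast at hcheb ⊢
    linear_combination (-sin θ ^ (2 * j) * F j (cos θ)) * hcheb
  have hzero := intervalIntegral.integral_eq_sub_of_hasDerivAt (a := 0) (b := 2 * π)
    (fun θ _ ↦ hderiv θ) (((hcont j).const_mul _).sub (hcont (j + 1)))
  rw [intervalIntegral.integral_sub ((hcont j).const_mul _) (hcont (j + 1)),
    intervalIntegral.integral_const_mul] at hzero
  simpa [sub_eq_zero] using hzero

theorem prod_mul_integral_cos_mul_comp_cos
    (hF : ∀ k, ∀ t ∈ Icc (-1) 1, HasDerivAt (F k) (F (k + 1) t) t) (m j : ℕ) :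
    (∏ l ∈ Finset.range j, ((m : ℝ) ^ 2 - (l : ℝ) ^ 2)) *
        ∫ θ in (0)..(2 * π), cos (m * θ) * F 0 (cos θ) =
      ∫ θ in (0)..(2 * π),
        sin θ ^ (2 * j) * (derivative^[j] (Chebyshev.T ℝ m)).eval (cos θ) * F j (cos θ) := by
  induction j with
  | zero => simp [Chebyshev.T_real_cos]
  | succ j ih =>
    rw [← integral_iterate_derivative_T_mul_succ hF, ← ih, Finset.prod_range_succ]
    ring

/-- Jacobi's formula, for `F k` the `k`-th derivative of `F 0`. -/
theorem prod_odd_mul_integral_cos_mul_comp_cos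
    (hF : ∀ k, ∀ t ∈ Icc (-1) 1, HasDerivAt (F k) (F (k + 1) t) t) (m : ℕ) :
    (∏ l ∈ Finset.range m, (2 * (l : ℝ) + 1)) *
        ∫ θ in (0)..(2 * π), cos (m * θ) * F 0 (cos θ) =
      ∫ θ in (0)..(2 * π), sin θ ^ (2 * m) * F m (cos θ) := by
  have hdeg : (derivative^[m] (Chebyshev.T ℝ m)).natDegree = 0 := by
    simpa using natDegree_iterate_derivative (Chebyshev.T ℝ m) m
  obtain ⟨c, hc⟩ := natDegree_eq_zero.1 hdeg
  have hone := Chebyshev.iterate_derivative_T_eval_one (R := ℝ) m m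
  have hmain := prod_mul_integral_cos_mul_comp_cos hF m m
  simp only [← hc, eval_C] at hone hmain
  push_cast at hone
  have hprod : ∏ l ∈ Finset.range m, ((m : ℝ) ^ 2 - (l : ℝ) ^ 2) ≠ 0 := by
    refine Finset.prod_ne_zero_iff.2 fun l hl ↦ (sub_pos.2 ?_).ne'
    gcongr
    exact Finset.mem_range.1 hl
  have hc₀ : c ≠ 0 := right_ne_zero_of_mul (hone ▸ hprod)
  rw [← hone] at hmain
  refine mul_left_cancel₀ hc₀ ?_
  rw [← intervalIntegral.integral_const_mul c (fun θ ↦ sin θ ^ (2 * m) * F m (cos θ))]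
  calc _ = _ := by rw [← mul_assoc, mul_comm c]
    _ = _ := hmain
    _ = _ := by congr 1 with θ; ring

theorem sub_mul_pos_of_abs_lt {A B t : ℝ} (h : |B| < A) (ht : t ∈ Icc (-1) 1) : 0 < A - B * t := by
  have hBt : |B * t| ≤ |B| := by
    rw [abs_mul]
    exact mul_le_of_le_one_right (abs_nonneg B) (abs_le.2 ht)
  exact sub_pos.2 ((le_abs_self _).trans_lt (hBt.trans_lt h))

theorem integral_cos_mul_rpow_sub_mul_cos (m : ℕ) {A B : ℝ} (h : |B| < A) :
    ∫ θ in (0)..(2 * π), cos (m * θ) * (A - B * cos θ) ^ (-(1 / 2) : ℝ) =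
      (B / 2) ^ m * ∫ θ in (0)..(2 * π),
        sin θ ^ (2 * m) * (A - B * cos θ) ^ (-(m + 1 / 2) : ℝ) := by
  let F (k : ℕ) (t : ℝ) : ℝ := B ^ k * (∏ l ∈ Finset.range k, ((l : ℝ) + 1 / 2)) *
    (A - B * t) ^ (-(k + 1 / 2) : ℝ)
  have hF (k : ℕ) (t : ℝ) (ht : t ∈ Icc (-1) 1) : HasDerivAt (F k) (F (k + 1) t) t := by
    have hbase : HasDerivAt (fun t ↦ A - B * t) (-B) t := by
      simpa using ((hasDerivAt_id t).const_mul B).const_sub A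
    refine ((hbase.rpow_const (Or.inl (sub_mul_pos_of_abs_lt h ht).ne')).const_mul _).congr_deriv ?_
    simp only [F, Finset.prod_range_succ]
    rw [show (-((k + 1 : ℕ) + 1 / 2) : ℝ) = -(k + 1 / 2) - 1 by push_cast; ring]
    ring
  have hprod : ∏ l ∈ Finset.range m, (2 * (l : ℝ) + 1) =
      2 ^ m * ∏ l ∈ Finset.range m, ((l : ℝ) + 1 / 2) := by
    rw [← Finset.card_range m, ← Finset.prod_const, Finset.card_range, ← Finset.prod_mul_distrib]
    exact Finset.prod_congr rfl fun l _ ↦ by ring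
  have hne : ∏ l ∈ Finset.range m, (2 * (l : ℝ) + 1) ≠ 0 :=
    Finset.prod_ne_zero_iff.2 fun l _ ↦ by positivity
  refine mul_left_cancel₀ hne ?_
  calc _ = (∏ l ∈ Finset.range m, (2 * (l : ℝ) + 1)) *
        ∫ θ in (0)..(2 * π), cos (m * θ) * F 0 (cos θ) := by simp [F]
    _ = ∫ θ in (0)..(2 * π), B ^ m * (∏ l ∈ Finset.range m, ((l : ℝ) + 1 / 2)) *
        (sin θ ^ (2 * m) * (A - B * cos θ) ^ (-(m + 1 / 2) : ℝ)) := by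
      rw [prod_odd_mul_integral_cos_mul_comp_cos hF]
      congr 1 with θ
      simp only [F]
      ring
    _ = _ := by
      have hpow : 2 ^ m * (B / 2) ^ m = B ^ m := by rw [← mul_pow, mul_div_cancel₀ B two_ne_zero]
      rw [intervalIntegral.integral_const_mul, hprod, ← hpow]
      ring

theorem integral_sin_mul_comp_cos_eq_zero (f : ℝ → ℝ) (m : ℕ) :
    ∫ θ in (0)..(2 * π), sin (m * θ) * f (cos θ) = 0 := by
  have hrefl := intervalIntegral.integral_comp_sub_left (a := 0) (b := 2 * π)
    (fun θ ↦ sin (m * θ) * f (cos θ)) (2 * π)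
  simp only [cos_two_pi_sub, mul_sub, sin_nat_mul_two_pi_sub, neg_mul, sub_self, sub_zero,
    intervalIntegral.integral_neg] at hrefl
  linarith

theorem integral_comp_cos_sub_mul_exp {f : ℝ → ℝ} (hf : ContinuousOn f (Icc (-1) 1)) (m : ℕ)
    (φ : ℝ) :
    ∫ t in (0)..(2 * π), (f (cos (t - φ)) : ℂ) * Complex.exp (Complex.I * m * t) =
      Complex.exp (Complex.I * m * φ) * (∫ θ in (0)..(2 * π), cos (m * θ) * f (cos θ) : ℝ) := by
  let g (θ : ℝ) : ℂ := (f (cos θ) : ℂ) * Complex.exp (Complex.I * m * θ)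
  have hg : Function.Periodic g (2 * π) := by
    intro θ
    simp only [g, cos_add_two_pi]
    rw [show Complex.I * m * ((θ + 2 * π : ℝ) : ℂ) =
        Complex.I * m * θ + m * (2 * π * Complex.I) by push_cast; ring,
      Complex.exp_add, Complex.exp_nat_mul_two_pi_mul_I, mul_one]
  have hshift (t : ℝ) : (f (cos (t - φ)) : ℂ) * Complex.exp (Complex.I * m * t) =
      Complex.exp (Complex.I * m * φ) * g (t - φ) := by
    simp only [g]
    rw [mul_left_comm, ← Complex.exp_add]
    push_cast
    ring_nf
  have hsplit (θ : ℝ) : g θ = ((cos (m * θ) * f (cos θ) : ℝ) : ℂ) +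
      Complex.I * ((sin (m * θ) * f (cos θ) : ℝ) : ℂ) := by
    simp only [g]
    rw [show Complex.I * m * (θ : ℂ) = ((m * θ : ℝ) : ℂ) * Complex.I by push_cast; ring,
      Complex.exp_mul_I]
    push_cast
    ring
  have hint {g : ℝ → ℝ} (hg : Continuous g) :
      IntervalIntegrable (fun θ ↦ ((g θ * f (cos θ) : ℝ) : ℂ)) volume 0 (2 * π) :=
    (Complex.continuous_ofReal.comp (hg.mul
      (hf.comp_continuous continuous_cos cos_mem_Icc))).intervalIntegrable _ _
  have hperiod : ∫ t in (0 - φ)..(2 * π - φ), g t = ∫ t in (0)..(2 * π), g t := by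
    simpa [sub_eq_neg_add, add_comm] using hg.intervalIntegral_add_eq (-φ) 0
  simp only [hshift]
  rw [intervalIntegral.integral_const_mul, intervalIntegral.integral_comp_sub_right, hperiod]
  simp only [hsplit]
  rw [intervalIntegral.integral_add (hint (by fun_prop)) ((hint (by fun_prop)).const_mul _),
    intervalIntegral.integral_const_mul, intervalIntegral.integral_ofReal,
    intervalIntegral.integral_ofReal, integral_sin_mul_comp_cos_eq_zero, Complex.ofReal_zero,
    mul_zero, add_zero]

end FourierCosine

section PowerKernel

theorem hasDerivAt_rpow_neg {R : ℝ → ℝ} {r x : ℝ} (hR : HasDerivAt R r x) (hpos : 0 < R x)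
    (ν : ℝ) : HasDerivAt (fun x ↦ R x ^ (-ν)) (-ν * r * R x ^ (-ν - 1)) x :=
  (hR.rpow_const (Or.inl hpos.ne')).congr_deriv (by ring)

theorem hasDerivAt_deriv_rpow_neg {R R' : ℝ → ℝ} {r x : ℝ} (hR : HasDerivAt R (R' x) x)
    (hR' : HasDerivAt R' r x) (hpos : 0 < R x) (ν : ℝ) :
    HasDerivAt (fun x ↦ -ν * R' x * R x ^ (-ν - 1))
      (ν * ((ν + 1) * R' x ^ 2 - R x * r) * R x ^ (-ν - 2)) x := by
  refine ((hR'.const_mul (-ν)).fun_mul (hR.rpow_const (Or.inl hpos.ne'))).congr_deriv ?_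
  rw [show -ν - 1 - 1 = -ν - 2 by ring, show -ν - 1 = -ν - 2 + 1 by ring,
    rpow_add_one hpos.ne']
  ring

variable {Y : Type*} [MetricSpace Y] [SecondCountableTopology Y] [MeasurableSpace Y] [BorelSpace Y]
  {μ : Measure Y} [IsFiniteMeasureOnCompacts μ] {K : Set Y} {U : Set ℝ} {w : Y → ℝ}
  {R R' R'' : ℝ → Y → ℝ}

theorem hasDerivAt_setIntegral_mul_rpow_neg (hK : IsCompact K) (hU : IsOpen U)
    (hw : Continuous w) (hR : Continuous fun q : ℝ × Y ↦ R q.1 q.2)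
    (hR' : Continuous fun q : ℝ × Y ↦ R' q.1 q.2)
    (hd : ∀ x y, HasDerivAt (fun x ↦ R x y) (R' x y) x) (hpos : ∀ x ∈ U, ∀ y, 0 < R x y)
    (ν : ℝ) {x : ℝ} (hx : x ∈ U) :
    HasDerivAt (fun x ↦ ∫ y in K, w y * R x y ^ (-ν) ∂μ)
      (∫ y in K, w y * (-ν * R' x y * R x y ^ (-ν - 1)) ∂μ) x := by
  refine hasDerivAt_setIntegral_of_isCompact hK hU (fun x hx ↦ ?_) ?_
    (fun x hx y _ ↦ (hasDerivAt_rpow_neg (hd x y) (hpos x hx y) ν).const_mul (w y)) hx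
  · have hRx : Continuous (R x) := hR.comp (by fun_prop : Continuous fun y : Y ↦ (x, y))
    exact (hw.mul (hRx.rpow_const fun y ↦ Or.inl (hpos x hx y).ne')).continuousOn
  · have hpow : ContinuousOn (fun q : ℝ × Y ↦ R q.1 q.2 ^ (-ν - 1)) (U ×ˢ K) :=
      hR.continuousOn.rpow_const fun q hq ↦ Or.inl (hpos q.1 hq.1 q.2).ne'
    fun_prop

theorem hasDerivAt_deriv_setIntegral_mul_rpow_neg (hK : IsCompact K) (hU : IsOpen U)
    (hw : Continuous w) (hR : Continuous fun q : ℝ × Y ↦ R q.1 q.2)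
    (hR' : Continuous fun q : ℝ × Y ↦ R' q.1 q.2) (hR'' : Continuous fun q : ℝ × Y ↦ R'' q.1 q.2)
    (hd : ∀ x y, HasDerivAt (fun x ↦ R x y) (R' x y) x)
    (hd' : ∀ x y, HasDerivAt (fun x ↦ R' x y) (R'' x y) x) (hpos : ∀ x ∈ U, ∀ y, 0 < R x y)
    (ν : ℝ) {x : ℝ} (hx : x ∈ U) :
    HasDerivAt (fun x ↦ ∫ y in K, w y * (-ν * R' x y * R x y ^ (-ν - 1)) ∂μ)
      (∫ y in K, w y * (ν * ((ν + 1) * R' x y ^ 2 - R x y * R'' x y) * R x y ^ (-ν - 2)) ∂μ)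
      x := by
  refine hasDerivAt_setIntegral_of_isCompact hK hU (fun x hx ↦ ?_) ?_
    (fun x hx y _ ↦ (hasDerivAt_deriv_rpow_neg (hd x y) (hd' x y) (hpos x hx y) ν).const_mul (w y))
    hx
  · have hRx : Continuous (R x) := hR.comp (by fun_prop : Continuous fun y : Y ↦ (x, y))
    have hR'x : Continuous (R' x) := hR'.comp (by fun_prop : Continuous fun y : Y ↦ (x, y))
    exact (hw.mul ((hR'x.const_mul _).mul
      (hRx.rpow_const fun y ↦ Or.inl (hpos x hx y).ne'))).continuousOn
  · have hpow : ContinuousOn (fun q : ℝ × Y ↦ R q.1 q.2 ^ (-ν - 2)) (U ×ˢ K) :=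
      hR.continuousOn.rpow_const fun q hq ↦ Or.inl (hpos q.1 hq.1 q.2).ne'
    fun_prop

end PowerKernel

section CosSinPair

/-- `(C, S)` is `(cosh, sinh)` if `ε = 1` and `(cos, sin)` if `ε = -1`; the two spheroidal
separation variables are treated alike by parametrizing them through such pairs. -/
structure IsCosSinPair (ε : ℝ) (C S : ℝ → ℝ) : Prop where
  sign_sq : ε ^ 2 = 1
  hasDerivAt_cos : ∀ x, HasDerivAt C (ε * S x) x
  hasDerivAt_sin : ∀ x, HasDerivAt S (C x) x
  cos_sq : ∀ x, C x ^ 2 = 1 + ε * S x ^ 2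
  cos_zero : C 0 = 1
  sin_zero : S 0 = 0

theorem isCosSinPair_cosh_sinh : IsCosSinPair 1 cosh sinh where
  sign_sq := one_pow 2
  hasDerivAt_cos x := by simpa using Real.hasDerivAt_cosh x
  hasDerivAt_sin := Real.hasDerivAt_sinh
  cos_sq x := by rw [cosh_sq']; ring
  cos_zero := Real.cosh_zero
  sin_zero := Real.sinh_zero

theorem isCosSinPair_cos_sin : IsCosSinPair (-1) cos sin where
  sign_sq := by norm_num
  hasDerivAt_cos x := by simpa using Real.hasDerivAt_cos x
  hasDerivAt_sin := Real.hasDerivAt_sin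
  cos_sq x := by rw [cos_sq']; ring
  cos_zero := Real.cos_zero
  sin_zero := Real.sin_zero

/-- Gegenbauer's equation `(x² - 1) P'' + 2 (m + 1) x P' = l P`, satisfied by the `m`-th derivatives
of the Legendre polynomials. -/
def IsGegenbauerSolution (m : ℕ) (l : ℝ) (P : ℝ[X]) : Prop :=
  ∀ x, (x ^ 2 - 1) * (derivative (derivative P)).eval x +
    2 * (m + 1) * x * (derivative P).eval x = l * P.eval x

variable {ε l : ℝ} {C S : ℝ → ℝ} {m : ℕ} {P : ℝ[X]}

theorem IsCosSinPair.hasDerivAt_eval (h : IsCosSinPair ε C S) (P : ℝ[X]) (x : ℝ) :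
    HasDerivAt (fun x ↦ P.eval (C x)) (ε * S x * (derivative P).eval (C x)) x :=
  ((P.hasDerivAt (C x)).comp x (h.hasDerivAt_cos x)).congr_deriv (mul_comm _ _)

theorem IsCosSinPair.hasDerivAt_deriv_eval (h : IsCosSinPair ε C S) (P : ℝ[X]) (x : ℝ) :
    HasDerivAt (fun x ↦ ε * S x * (derivative P).eval (C x))
      (ε * C x * (derivative P).eval (C x) + S x ^ 2 * (derivative (derivative P)).eval (C x))
      x := by
  refine (((h.hasDerivAt_sin x).const_mul ε).fun_mul
    (h.hasDerivAt_eval (derivative P) x)).congr_deriv ?_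
  linear_combination S x ^ 2 * (derivative (derivative P)).eval (C x) * h.sign_sq

theorem IsGegenbauerSolution.comp_cosSinPair (hP : IsGegenbauerSolution m l P)
    (h : IsCosSinPair ε C S) (x : ℝ) :
    S x * (ε * C x * (derivative P).eval (C x) +
        S x ^ 2 * (derivative (derivative P)).eval (C x)) +
      (2 * m + 1) * C x * (ε * S x * (derivative P).eval (C x)) =
    ε * l * (S x * P.eval (C x)) := by
  linear_combination ε * S x * hP (C x) -
    S x * (derivative (derivative P)).eval (C x) * (ε * h.cos_sq x + S x ^ 2 * h.sign_sq)

theorem IsCosSinPair.isSturmLiouvilleSolution (h : IsCosSinPair ε C S) {b : ℝ} {f f' f'' : ℝ → ℝ}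
    (hf : ∀ x ∈ Ico 0 b, HasDerivAt f (f' x) x) (hf' : ∀ x ∈ Ico 0 b, HasDerivAt f' (f'' x) x)
    (hode : ∀ x ∈ Ioo 0 b, S x * f'' x + (2 * m + 1) * C x * f' x = l * (S x * f x)) :
    IsSturmLiouvilleSolution (fun x ↦ S x ^ (2 * m + 1)) l b f f' where
  hasDerivAt x hx := hf x (Ioo_subset_Ico_self hx)
  hasDerivAt_weight_mul x hx := by
    refine (((h.hasDerivAt_sin x).fun_pow (2 * m + 1)).fun_mul
      (hf' x (Ioo_subset_Ico_self hx))).congr_deriv ?_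
    push_cast
    linear_combination S x ^ (2 * m) * hode x hx
  continuousOn x hx := (hf x hx).continuousAt.continuousWithinAt
  continuousOn_deriv x hx := (hf' x hx).continuousAt.continuousWithinAt

/-- Green's formula for the Gegenbauer operator in the variable `α`, where `cos α` is the argument
of `P`. -/
theorem IsGegenbauerSolution.hasDerivAt_wronskian (hP : IsGegenbauerSolution m l P) {U U' : ℝ → ℝ}
    {r α : ℝ} (hU : HasDerivAt U (U' α) α) (hU' : HasDerivAt U' r α) :
    HasDerivAt (fun α ↦ sin α ^ (2 * m + 1) *
        (P.eval (cos α) * U' α - -1 * sin α * (derivative P).eval (cos α) * U α))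
      (sin α ^ (2 * m) * P.eval (cos α) * (sin α * r + (2 * m + 1) * cos α * U' α) +
        l * (P.eval (cos α) * sin α ^ (2 * m + 1) * U α)) α := by
  have hq := isCosSinPair_cos_sin.hasDerivAt_eval P α
  have hq' := isCosSinPair_cos_sin.hasDerivAt_deriv_eval P α
  refine (((hasDerivAt_sin α).fun_pow (2 * m + 1)).fun_mul
    ((hq.fun_mul hU').fun_sub (hq'.fun_mul hU))).congr_deriv ?_
  push_cast
  linear_combination -sin α ^ (2 * m) * U α * hP.comp_cosSinPair isCosSinPair_cos_sin α

end CosSinPair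

section SpheroidalKernel

/-- The squared distance, in units of the focal distance, of two points in prolate spheroidal
coordinates: the first point is `(u, v)`, with `σ = √(u² - 1) √(1 - v²)`, the second one is
`(c, k)`, with `s = √(c² - 1)` and `z = √(1 - k²)`, and `w` is the cosine of the difference of
azimuths. The values are separate arguments so that `(c, s)` may also be `(cos x, sin x)`. -/
def spheroidalSqDist (u v σ c s k z w : ℝ) : ℝ :=
  u ^ 2 + v ^ 2 + c ^ 2 + k ^ 2 - 2 - 2 * u * v * c * k - 2 * σ * s * z * w

/-- The derivative of `spheroidalSqDist` in `x` when `(c, s) = (C x, S x)` for a pair of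
sign `ε`. -/
def spheroidalSqDistDeriv (ε u v σ c s k z w : ℝ) : ℝ :=
  2 * ε * c * s - 2 * u * v * ε * s * k - 2 * σ * c * z * w

/-- The derivative of `spheroidalSqDistDeriv` in `x` when `(c, s) = (C x, S x)` for a pair of
sign `ε`. -/
def spheroidalSqDistDeriv₂ (ε u v σ c s k z w : ℝ) : ℝ :=
  2 * ε * (c ^ 2 + ε * s ^ 2) - 2 * u * v * ε * c * k - 2 * σ * ε * s * z * w

theorem spheroidalSqDist_comm (u v σ c s k z w : ℝ) :
    spheroidalSqDist u v σ c s k z w = spheroidalSqDist u v σ k z c s w := by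
  unfold spheroidalSqDist; ring

theorem IsCosSinPair.hasDerivAt_spheroidalSqDist {ε : ℝ} {C S : ℝ → ℝ} (h : IsCosSinPair ε C S)
    (u v σ k z w x : ℝ) :
    HasDerivAt (fun x ↦ spheroidalSqDist u v σ (C x) (S x) k z w)
      (spheroidalSqDistDeriv ε u v σ (C x) (S x) k z w) x := by
  refine (((((h.hasDerivAt_cos x).fun_pow 2).const_add (u ^ 2 + v ^ 2)).add_const
    (k ^ 2)).sub_const 2 |>.fun_sub (((h.hasDerivAt_cos x).const_mul (2 * u * v)).mul_const k)
    |>.fun_sub ((((h.hasDerivAt_sin x).const_mul (2 * σ)).mul_const z).mul_const w)).congr_deriv ?_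
  simp only [spheroidalSqDistDeriv]
  push_cast
  ring

theorem IsCosSinPair.hasDerivAt_spheroidalSqDistDeriv {ε : ℝ} {C S : ℝ → ℝ}
    (h : IsCosSinPair ε C S) (u v σ k z w x : ℝ) :
    HasDerivAt (fun x ↦ spheroidalSqDistDeriv ε u v σ (C x) (S x) k z w)
      (spheroidalSqDistDeriv₂ ε u v σ (C x) (S x) k z w) x := by
  refine ((((h.hasDerivAt_cos x).const_mul (2 * ε)).fun_mul (h.hasDerivAt_sin x)).fun_sub
    (((h.hasDerivAt_sin x).const_mul (2 * u * v * ε)).mul_const k)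
    |>.fun_sub ((((h.hasDerivAt_cos x).const_mul (2 * σ)).mul_const z).mul_const w)).congr_deriv ?_
  simp only [spheroidalSqDistDeriv₂]
  ring

section Algebra

variable {ε u v σ c s k z : ℝ}

theorem spheroidalSqDistDeriv₂_add (hε : ε ^ 2 = 1) (hc : c ^ 2 = 1 + ε * s ^ 2)
    (hk : k ^ 2 = 1 - z ^ 2) (w : ℝ) :
    spheroidalSqDistDeriv₂ ε u v σ c s k z w + ε * spheroidalSqDistDeriv₂ (-1) u v σ k z c s w =
      4 * (s ^ 2 + ε * z ^ 2) := by
  unfold spheroidalSqDistDeriv₂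
  linear_combination (2 * ε) * hc + 4 * s ^ 2 * hε - 2 * ε * hk

theorem spheroidalSqDistDeriv_add (hε : ε ^ 2 = 1) (hc : c ^ 2 = 1 + ε * s ^ 2)
    (hk : k ^ 2 = 1 - z ^ 2) (w : ℝ) :
    c * z * spheroidalSqDistDeriv ε u v σ c s k z w +
        ε * k * s * spheroidalSqDistDeriv (-1) u v σ k z c s w +
        2 * ε * σ * (s ^ 2 + ε * z ^ 2) * w =
      2 * s * z * (s ^ 2 + ε * z ^ 2) := by
  unfold spheroidalSqDistDeriv
  linear_combination (2 * ε * s * z - 2 * σ * z ^ 2 * w) * hc +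
    (2 * s ^ 3 * z + 2 * σ * z ^ 2 * w) * hε - (2 * ε * s * z + 2 * ε * σ * s ^ 2 * w) * hk

theorem spheroidalSqDistDeriv_sq_add (hε : ε ^ 2 = 1) (hc : c ^ 2 = 1 + ε * s ^ 2)
    (hk : k ^ 2 = 1 - z ^ 2) (hσ : σ ^ 2 = ε * ((u ^ 2 - 1) * (1 - v ^ 2))) (w : ℝ) :
    spheroidalSqDistDeriv ε u v σ c s k z w ^ 2 +
        ε * spheroidalSqDistDeriv (-1) u v σ k z c s w ^ 2 +
        4 * ε * σ ^ 2 * (s ^ 2 + ε * z ^ 2) * (1 - w ^ 2) =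
      4 * (s ^ 2 + ε * z ^ 2) * spheroidalSqDist u v σ c s k z w := by
  unfold spheroidalSqDistDeriv spheroidalSqDist
  have h1 : c ^ 2 * z ^ 2 + ε * s ^ 2 * k ^ 2 = ε * (s ^ 2 + ε * z ^ 2) := by
    linear_combination z ^ 2 * hc + ε * s ^ 2 * hk - z ^ 2 * hε
  have h2 : s ^ 2 * k ^ 2 + ε * z ^ 2 * c ^ 2 = s ^ 2 + ε * z ^ 2 := by
    linear_combination ε * z ^ 2 * hc + s ^ 2 * hk + z ^ 2 * s ^ 2 * hε
  have h3 : s ^ 2 * c ^ 2 + ε * z ^ 2 * k ^ 2 = (s ^ 2 + ε * z ^ 2) * (c ^ 2 + k ^ 2 - 1) := by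
    linear_combination -h2
  have h4 : ε * σ ^ 2 = (u ^ 2 - 1) * (1 - v ^ 2) := by
    linear_combination ε * hσ + (u ^ 2 - 1) * (1 - v ^ 2) * hε
  have h5 : ε * (c ^ 2 - k ^ 2) = s ^ 2 + ε * z ^ 2 := by
    linear_combination ε * hc + s ^ 2 * hε - ε * hk
  linear_combination -4 * (-(s ^ 2 * (c - u * v * k) ^ 2) * hε - (u * v) ^ 2 * h2 - h3 +
    2 * s * σ * z * w * h5 - σ ^ 2 * w ^ 2 * h1 - (s ^ 2 + ε * z ^ 2) * h4)

/-- The separated operator applied to the `-ν`-th power of the squared distance, divided by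
`ν` times the `(-ν - 2)`-nd power: only an azimuthal derivative remains. -/
theorem separated_operator_spheroidalSqDist (hε : ε ^ 2 = 1) (hc : c ^ 2 = 1 + ε * s ^ 2)
    (hk : k ^ 2 = 1 - z ^ 2) (hσ : σ ^ 2 = ε * ((u ^ 2 - 1) * (1 - v ^ 2))) (w ν : ℝ) :
    z * (s * ((ν + 1) * spheroidalSqDistDeriv ε u v σ c s k z w ^ 2 -
          spheroidalSqDist u v σ c s k z w * spheroidalSqDistDeriv₂ ε u v σ c s k z w) -
        2 * ν * c * (spheroidalSqDistDeriv ε u v σ c s k z w *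
          spheroidalSqDist u v σ c s k z w)) +
      ε * s * (z * ((ν + 1) * spheroidalSqDistDeriv (-1) u v σ k z c s w ^ 2 -
          spheroidalSqDist u v σ c s k z w * spheroidalSqDistDeriv₂ (-1) u v σ k z c s w) -
        2 * ν * k * (spheroidalSqDistDeriv (-1) u v σ k z c s w *
          spheroidalSqDist u v σ c s k z w)) =
    4 * ε * σ * (s ^ 2 + ε * z ^ 2) *
      (ν * spheroidalSqDist u v σ c s k z w * w - (ν + 1) * σ * s * z * (1 - w ^ 2)) := by
  linear_combination (ν + 1) * s * z * spheroidalSqDistDeriv_sq_add hε hc hk hσ w -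
    spheroidalSqDist u v σ c s k z w * s * z *
      spheroidalSqDistDeriv₂_add (u := u) (v := v) (σ := σ) hε hc hk w -
    2 * ν * spheroidalSqDist u v σ c s k z w *
      spheroidalSqDistDeriv_add (u := u) (v := v) (σ := σ) hε hc hk w

end Algebra

theorem hasDerivAt_sin_pow_mul_spheroidalSqDist_rpow {u v σ c s k z θ : ℝ} (m : ℕ)
    (hpos : 0 < spheroidalSqDist u v σ c s k z (cos θ)) :
    HasDerivAt (fun θ ↦ sin θ ^ (2 * m + 1) *
        spheroidalSqDist u v σ c s k z (cos θ) ^ (-(m + 1 / 2 : ℝ) - 1))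
      (2 * sin θ ^ (2 * m) * ((m + 1 / 2) * spheroidalSqDist u v σ c s k z (cos θ) * cos θ -
        (m + 1 / 2 + 1) * σ * s * z * sin θ ^ 2) *
        spheroidalSqDist u v σ c s k z (cos θ) ^ (-(m + 1 / 2 : ℝ) - 2)) θ := by
  have hR : HasDerivAt (fun θ ↦ spheroidalSqDist u v σ c s k z (cos θ))
      (2 * σ * s * z * sin θ) θ :=
    (((hasDerivAt_cos θ).const_mul (2 * σ * s * z)).const_sub
      (u ^ 2 + v ^ 2 + c ^ 2 + k ^ 2 - 2 - 2 * u * v * c * k)).congr_deriv (by ring)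
  refine (((hasDerivAt_sin θ).fun_pow (2 * m + 1)).fun_mul
    (hR.rpow_const (Or.inl hpos.ne'))).congr_deriv ?_
  rw [show -(m + 1 / 2 : ℝ) - 1 - 1 = -(m + 1 / 2 : ℝ) - 2 by ring,
    show -(m + 1 / 2 : ℝ) - 1 = -(m + 1 / 2 : ℝ) - 2 + 1 by ring, rpow_add_one hpos.ne']
  push_cast
  ring

end SpheroidalKernel

section SpheroidalPotential

/-- The kernel whose integral against `gegenbauerWeight` is `gegenbauerPotential`. -/
def spheroidalKernel (m : ℕ) (u v σ c s k z w : ℝ) : ℝ :=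
  spheroidalSqDist u v σ c s k z w ^ (-(m + 1 / 2 : ℝ))

/-- The derivative of `spheroidalKernel` in `x` when `(c, s) = (C x, S x)` for a pair of
sign `ε`. -/
def spheroidalKernelDeriv (m : ℕ) (ε u v σ c s k z w : ℝ) : ℝ :=
  -(m + 1 / 2 : ℝ) * spheroidalSqDistDeriv ε u v σ c s k z w *
    spheroidalSqDist u v σ c s k z w ^ (-(m + 1 / 2 : ℝ) - 1)

/-- The derivative of `spheroidalKernelDeriv` in `x` when `(c, s) = (C x, S x)` for a pair of
sign `ε`. -/
def spheroidalKernelDeriv₂ (m : ℕ) (ε u v σ c s k z w : ℝ) : ℝ :=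
  (m + 1 / 2 : ℝ) * ((m + 1 / 2 + 1) * spheroidalSqDistDeriv ε u v σ c s k z w ^ 2 -
    spheroidalSqDist u v σ c s k z w * spheroidalSqDistDeriv₂ ε u v σ c s k z w) *
    spheroidalSqDist u v σ c s k z w ^ (-(m + 1 / 2 : ℝ) - 2)

/-- The weight on the box of pairs `(α, θ)` for `gegenbauerPotential`: `cos α` and `θ` are the polar
spheroidal coordinate and the azimuth of the source point. -/
def gegenbauerWeight (m : ℕ) (P : ℝ[X]) (y : ℝ × ℝ) : ℝ :=
  P.eval (cos y.1) * sin y.1 ^ (2 * m + 1) * sin y.2 ^ (2 * m)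

/-- The integral to which the potential of a density of azimuthal order `m` reduces, as a function
of the parameters of `spheroidalSqDist` other than those integrated over. -/
def gegenbauerPotential (m : ℕ) (P : ℝ[X]) (u v σ c s : ℝ) : ℝ :=
  ∫ y in Icc 0 π ×ˢ Icc 0 (2 * π), gegenbauerWeight m P y *
    spheroidalKernel m u v σ c s (cos y.1) (sin y.1) (cos y.2)

theorem continuous_gegenbauerWeight (m : ℕ) (P : ℝ[X]) : Continuous (gegenbauerWeight m P) := by
  unfold gegenbauerWeight
  fun_prop

theorem spheroidalKernelDeriv_pde {ε u v σ c s k z w : ℝ} (m : ℕ) (hε : ε ^ 2 = 1)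
    (hc : c ^ 2 = 1 + ε * s ^ 2) (hk : k ^ 2 = 1 - z ^ 2)
    (hσ : σ ^ 2 = ε * ((u ^ 2 - 1) * (1 - v ^ 2)))
    (hpos : 0 < spheroidalSqDist u v σ c s k z w) :
    z * (s * spheroidalKernelDeriv₂ m ε u v σ c s k z w +
        (2 * m + 1) * c * spheroidalKernelDeriv m ε u v σ c s k z w) +
      ε * s * (z * spheroidalKernelDeriv₂ m (-1) u v σ k z c s w +
        (2 * m + 1) * k * spheroidalKernelDeriv m (-1) u v σ k z c s w) =
    2 * (2 * m + 1) * ε * σ * (s ^ 2 + ε * z ^ 2) *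
      (((m + 1 / 2) * spheroidalSqDist u v σ c s k z w * w -
        (m + 1 / 2 + 1) * σ * s * z * (1 - w ^ 2)) *
        spheroidalSqDist u v σ c s k z w ^ (-(m + 1 / 2 : ℝ) - 2)) := by
  simp only [spheroidalKernelDeriv, spheroidalKernelDeriv₂, spheroidalSqDist_comm u v σ k z c s]
  rw [show -(m + 1 / 2 : ℝ) - 1 = -(m + 1 / 2 : ℝ) - 2 + 1 by ring, rpow_add_one hpos.ne']
  linear_combination (m + 1 / 2) * spheroidalSqDist u v σ c s k z w ^ (-(m + 1 / 2 : ℝ) - 2) *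
    separated_operator_spheroidalSqDist hε hc hk hσ w (m + 1 / 2)

variable {ε u v σ c s l : ℝ} {m : ℕ} {P : ℝ[X]}

theorem continuous_spheroidalSqDist_angles (u v σ c s : ℝ) :
    Continuous fun y : ℝ × ℝ ↦ spheroidalSqDist u v σ c s (cos y.1) (sin y.1) (cos y.2) := by
  unfold spheroidalSqDist
  fun_prop

theorem continuous_spheroidalSqDistDeriv_angles (ε u v σ c s : ℝ) :
    Continuous fun y : ℝ × ℝ ↦
      spheroidalSqDistDeriv ε u v σ (cos y.1) (sin y.1) c s (cos y.2) := by
  unfold spheroidalSqDistDeriv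
  fun_prop

theorem continuous_spheroidalSqDistDeriv₂_angles (ε u v σ c s : ℝ) :
    Continuous fun y : ℝ × ℝ ↦
      spheroidalSqDistDeriv₂ ε u v σ (cos y.1) (sin y.1) c s (cos y.2) := by
  unfold spheroidalSqDistDeriv₂
  fun_prop

/-- The azimuthal derivative found in `hasDerivAt_sin_pow_mul_spheroidalSqDist_rpow`. -/
def azimuthalFluxDeriv (m : ℕ) (u v σ c s : ℝ) (y : ℝ × ℝ) : ℝ :=
  2 * sin y.2 ^ (2 * m) *
    ((m + 1 / 2) * spheroidalSqDist u v σ c s (cos y.1) (sin y.1) (cos y.2) * cos y.2 -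
      (m + 1 / 2 + 1) * σ * s * sin y.1 * sin y.2 ^ 2) *
    spheroidalSqDist u v σ c s (cos y.1) (sin y.1) (cos y.2) ^ (-(m + 1 / 2 : ℝ) - 2)

/-- The polar derivative found in `IsGegenbauerSolution.hasDerivAt_wronskian` when `U` is
`spheroidalKernel`. -/
def polarFluxDeriv (m : ℕ) (l : ℝ) (P : ℝ[X]) (u v σ c s : ℝ) (y : ℝ × ℝ) : ℝ :=
  sin y.1 ^ (2 * m) * P.eval (cos y.1) *
      (sin y.1 * spheroidalKernelDeriv₂ m (-1) u v σ (cos y.1) (sin y.1) c s (cos y.2) +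
        (2 * m + 1) * cos y.1 *
          spheroidalKernelDeriv m (-1) u v σ (cos y.1) (sin y.1) c s (cos y.2)) +
    l * (P.eval (cos y.1) * sin y.1 ^ (2 * m + 1) *
      spheroidalKernel m u v σ (cos y.1) (sin y.1) c s (cos y.2))

variable (hpos : ∀ α θ, 0 < spheroidalSqDist u v σ c s (cos α) (sin α) (cos θ))

include hpos in
theorem continuous_spheroidalSqDist_angles_rpow (p : ℝ) :
    Continuous fun y : ℝ × ℝ ↦
      spheroidalSqDist u v σ c s (cos y.1) (sin y.1) (cos y.2) ^ p :=
  (continuous_spheroidalSqDist_angles u v σ c s).rpow_const fun y ↦ Or.inl (hpos y.1 y.2).ne'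

include hpos in
theorem continuous_azimuthalFluxDeriv (m : ℕ) :
    Continuous (azimuthalFluxDeriv m u v σ c s) := by
  have hR := continuous_spheroidalSqDist_angles u v σ c s
  have hpow := continuous_spheroidalSqDist_angles_rpow hpos
  unfold azimuthalFluxDeriv
  fun_prop

include hpos in
theorem continuous_polarFluxDeriv (m : ℕ) (l : ℝ) (P : ℝ[X]) :
    Continuous (polarFluxDeriv m l P u v σ c s) := by
  have hR := continuous_spheroidalSqDist_angles u v σ c s
  have hpow := continuous_spheroidalSqDist_angles_rpow hpos
  have hR₁ := continuous_spheroidalSqDistDeriv_angles (-1) u v σ c s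
  have hR₂ := continuous_spheroidalSqDistDeriv₂_angles (-1) u v σ c s
  simp only [spheroidalSqDist_comm u v σ c s] at hR hpow
  unfold polarFluxDeriv spheroidalKernelDeriv₂ spheroidalKernelDeriv spheroidalKernel
  fun_prop

include hpos in
theorem setIntegral_azimuthalFluxDeriv_eq_zero {f : ℝ → ℝ} (hf : Continuous f) (m : ℕ) :
    ∫ y in Icc 0 π ×ˢ Icc 0 (2 * π), f y.1 * azimuthalFluxDeriv m u v σ c s y = 0 :=
  setIntegral_prod_deriv_snd_eq_zero (H := fun α θ ↦ f α * azimuthalFluxDeriv m u v σ c s (α, θ))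
    (by positivity) ((hf.comp continuous_fst).mul (continuous_azimuthalFluxDeriv hpos m))
    (fun α θ ↦ (hasDerivAt_sin_pow_mul_spheroidalSqDist_rpow m (hpos α θ)).const_mul (f α))
    (by simp)

include hpos in
theorem IsGegenbauerSolution.setIntegral_polarFluxDeriv_eq_zero
    (hP : IsGegenbauerSolution m l P) {f : ℝ → ℝ} (hf : Continuous f) :
    ∫ y in Icc 0 π ×ˢ Icc 0 (2 * π), f y.2 * polarFluxDeriv m l P u v σ c s y = 0 := by
  have hR (θ : ℝ) := isCosSinPair_cos_sin.hasDerivAt_spheroidalSqDist u v σ c s (cos θ)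
  have hR' (θ : ℝ) := isCosSinPair_cos_sin.hasDerivAt_spheroidalSqDistDeriv u v σ c s (cos θ)
  have hpos' (α θ : ℝ) : 0 < spheroidalSqDist u v σ (cos α) (sin α) c s (cos θ) :=
    spheroidalSqDist_comm u v σ c s _ _ _ ▸ hpos α θ
  have hd (α θ : ℝ) := (hP.hasDerivAt_wronskian
    (hasDerivAt_rpow_neg (hR θ α) (hpos' α θ) (m + 1 / 2))
    (hasDerivAt_deriv_rpow_neg (hR θ α) (hR' θ α) (hpos' α θ) (m + 1 / 2))).const_mul (f θ)
  exact setIntegral_prod_deriv_fst_eq_zero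
    (H := fun α θ ↦ f θ * polarFluxDeriv m l P u v σ c s (α, θ)) pi_nonneg
    ((hf.comp continuous_snd).mul (continuous_polarFluxDeriv hpos m l P)) hd (by simp)

theorem gegenbauerWeight_mul_spheroidalKernelDeriv (m : ℕ) (l : ℝ) (P : ℝ[X])
    (hε : ε ^ 2 = 1) (hc : c ^ 2 = 1 + ε * s ^ 2)
    (hσ : σ ^ 2 = ε * ((u ^ 2 - 1) * (1 - v ^ 2))) {y : ℝ × ℝ}
    (hy : 0 < spheroidalSqDist u v σ c s (cos y.1) (sin y.1) (cos y.2)) :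
    gegenbauerWeight m P y *
      (s * spheroidalKernelDeriv₂ m ε u v σ c s (cos y.1) (sin y.1) (cos y.2) +
        (2 * m + 1) * c * spheroidalKernelDeriv m ε u v σ c s (cos y.1) (sin y.1) (cos y.2)) =
    (2 * m + 1) * ε * σ * (s ^ 2 + ε * sin y.1 ^ 2) * P.eval (cos y.1) * sin y.1 ^ (2 * m) *
        azimuthalFluxDeriv m u v σ c s y -
      ε * s * sin y.2 ^ (2 * m) * polarFluxDeriv m l P u v σ c s y +
      ε * l * s * (gegenbauerWeight m P y *
        spheroidalKernel m u v σ c s (cos y.1) (sin y.1) (cos y.2)) := by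
  have hpde := spheroidalKernelDeriv_pde m hε hc (cos_sq' y.1) hσ hy
  rw [← sin_sq] at hpde
  simp only [polarFluxDeriv, azimuthalFluxDeriv, gegenbauerWeight, spheroidalKernel,
    spheroidalSqDist_comm u v σ (cos y.1)]
  linear_combination P.eval (cos y.1) * sin y.1 ^ (2 * m) * sin y.2 ^ (2 * m) * hpde

include hpos in
theorem IsGegenbauerSolution.setIntegral_spheroidalKernelDeriv (hP : IsGegenbauerSolution m l P)
    (hε : ε ^ 2 = 1) (hc : c ^ 2 = 1 + ε * s ^ 2)
    (hσ : σ ^ 2 = ε * ((u ^ 2 - 1) * (1 - v ^ 2))) :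
    ∫ y in Icc 0 π ×ˢ Icc 0 (2 * π), gegenbauerWeight m P y *
      (s * spheroidalKernelDeriv₂ m ε u v σ c s (cos y.1) (sin y.1) (cos y.2) +
        (2 * m + 1) * c * spheroidalKernelDeriv m ε u v σ c s (cos y.1) (sin y.1) (cos y.2)) =
    ε * l * s * gegenbauerPotential m P u v σ c s := by
  let f (α : ℝ) : ℝ :=
    (2 * m + 1) * ε * σ * (s ^ 2 + ε * sin α ^ 2) * P.eval (cos α) * sin α ^ (2 * m)
  let g (θ : ℝ) : ℝ := ε * s * sin θ ^ (2 * m)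
  have hf : Continuous f := by fun_prop
  have hg : Continuous g := by fun_prop
  have hW := continuous_gegenbauerWeight m P
  have hK : Continuous fun y : ℝ × ℝ ↦
      spheroidalKernel m u v σ c s (cos y.1) (sin y.1) (cos y.2) :=
    continuous_spheroidalSqDist_angles_rpow hpos _
  have hA := continuous_azimuthalFluxDeriv hpos m
  have hB := continuous_polarFluxDeriv hpos m l P
  have hint {F : ℝ × ℝ → ℝ} (hF : Continuous F) :
      IntegrableOn F (Icc 0 π ×ˢ Icc 0 (2 * π)) :=
    hF.continuousOn.integrableOn_compact (isCompact_Icc.prod isCompact_Icc)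
  have hfA := hint (hf.fst'.fun_mul hA)
  have hgB := hint (hg.snd'.fun_mul hB)
  have hWK := hint ((hW.fun_mul hK).const_mul (ε * l * s))
  calc _ = ∫ y in Icc 0 π ×ˢ Icc 0 (2 * π), (f y.1 * azimuthalFluxDeriv m u v σ c s y -
        g y.2 * polarFluxDeriv m l P u v σ c s y + ε * l * s * (gegenbauerWeight m P y *
          spheroidalKernel m u v σ c s (cos y.1) (sin y.1) (cos y.2))) := by
        congr 1 with y
        exact gegenbauerWeight_mul_spheroidalKernelDeriv m l P hε hc hσ (hpos y.1 y.2)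
    _ = _ := by
        rw [gegenbauerPotential, integral_add (hfA.fun_sub hgB) hWK, integral_sub hfA hgB,
          setIntegral_azimuthalFluxDeriv_eq_zero hpos hf,
          hP.setIntegral_polarFluxDeriv_eq_zero hpos hg, sub_zero, zero_add, integral_const_mul]

include hpos in
theorem IsGegenbauerSolution.gegenbauerPotential_ode (hP : IsGegenbauerSolution m l P)
    (hε : ε ^ 2 = 1) (hc : c ^ 2 = 1 + ε * s ^ 2)
    (hσ : σ ^ 2 = ε * ((u ^ 2 - 1) * (1 - v ^ 2))) :
    s * (∫ y in Icc 0 π ×ˢ Icc 0 (2 * π), gegenbauerWeight m P y *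
        spheroidalKernelDeriv₂ m ε u v σ c s (cos y.1) (sin y.1) (cos y.2)) +
      (2 * m + 1) * c * (∫ y in Icc 0 π ×ˢ Icc 0 (2 * π), gegenbauerWeight m P y *
        spheroidalKernelDeriv m ε u v σ c s (cos y.1) (sin y.1) (cos y.2)) =
    ε * l * (s * gegenbauerPotential m P u v σ c s) := by
  have hW := continuous_gegenbauerWeight m P
  have hR := continuous_spheroidalSqDist_angles u v σ c s
  have hpow := continuous_spheroidalSqDist_angles_rpow hpos
  have hcont₁ : Continuous fun y : ℝ × ℝ ↦
      spheroidalKernelDeriv m ε u v σ c s (cos y.1) (sin y.1) (cos y.2) := by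
    unfold spheroidalKernelDeriv spheroidalSqDistDeriv; fun_prop
  have hcont₂ : Continuous fun y : ℝ × ℝ ↦
      spheroidalKernelDeriv₂ m ε u v σ c s (cos y.1) (sin y.1) (cos y.2) := by
    unfold spheroidalKernelDeriv₂ spheroidalSqDistDeriv spheroidalSqDistDeriv₂; fun_prop
  have hint {F : ℝ × ℝ → ℝ} (hF : Continuous F) (k : ℝ) :
      IntegrableOn (fun y ↦ k * (gegenbauerWeight m P y * F y)) (Icc 0 π ×ˢ Icc 0 (2 * π)) :=
    ((hW.fun_mul hF).const_mul k).continuousOn.integrableOn_compact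
      (isCompact_Icc.prod isCompact_Icc)
  rw [← integral_const_mul, ← integral_const_mul, ← integral_add (hint hcont₂ _) (hint hcont₁ _),
    ← mul_assoc, ← hP.setIntegral_spheroidalKernelDeriv hpos hε hc hσ]
  congr 1 with y
  ring

end SpheroidalPotential

section Separation

theorem IsCosSinPair.continuous_cos {ε : ℝ} {C S : ℝ → ℝ} (h : IsCosSinPair ε C S) :
    Continuous C :=
  continuous_iff_continuousAt.2 fun x ↦ (h.hasDerivAt_cos x).continuousAt

theorem IsCosSinPair.continuous_sin {ε : ℝ} {C S : ℝ → ℝ} (h : IsCosSinPair ε C S) :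
    Continuous S :=
  continuous_iff_continuousAt.2 fun x ↦ (h.hasDerivAt_sin x).continuousAt

variable {ε u v σ b l : ℝ} {m : ℕ} {P : ℝ[X]} {C S : ℝ → ℝ}

theorem IsGegenbauerSolution.isSturmLiouvilleSolution (hP : IsGegenbauerSolution m l P)
    (h : IsCosSinPair ε C S) (b : ℝ) :
    IsSturmLiouvilleSolution (fun x ↦ S x ^ (2 * m + 1)) (ε * l) b (fun x ↦ P.eval (C x))
      (fun x ↦ ε * S x * (derivative P).eval (C x)) :=
  h.isSturmLiouvilleSolution (fun x _ ↦ h.hasDerivAt_eval P x)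
    (fun x _ ↦ h.hasDerivAt_deriv_eval P x) fun x _ ↦ hP.comp_cosSinPair h x

theorem IsGegenbauerSolution.isSturmLiouvilleSolution_gegenbauerPotential
    (hP : IsGegenbauerSolution m l P) (h : IsCosSinPair ε C S)
    (hσ : σ ^ 2 = ε * ((u ^ 2 - 1) * (1 - v ^ 2)))
    (hpos : ∀ x ∈ Ioo (-b) b, ∀ y : ℝ × ℝ,
      0 < spheroidalSqDist u v σ (C x) (S x) (cos y.1) (sin y.1) (cos y.2)) :
    IsSturmLiouvilleSolution (fun x ↦ S x ^ (2 * m + 1)) (ε * l) b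
      (fun x ↦ gegenbauerPotential m P u v σ (C x) (S x))
      (fun x ↦ ∫ y in Icc 0 π ×ˢ Icc 0 (2 * π), gegenbauerWeight m P y *
        spheroidalKernelDeriv m ε u v σ (C x) (S x) (cos y.1) (sin y.1) (cos y.2)) := by
  have hC := h.continuous_cos
  have hS := h.continuous_sin
  have hsub : Ico 0 b ⊆ Ioo (-b) b := fun x hx ↦ ⟨by linarith [hx.1, hx.2], hx.2⟩
  have hK : IsCompact (Icc 0 π ×ˢ Icc 0 (2 * π)) := isCompact_Icc.prod isCompact_Icc
  have hW := continuous_gegenbauerWeight m P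
  have hR : Continuous fun q : ℝ × ℝ × ℝ ↦
      spheroidalSqDist u v σ (C q.1) (S q.1) (cos q.2.1) (sin q.2.1) (cos q.2.2) := by
    unfold spheroidalSqDist; fun_prop
  have hR' : Continuous fun q : ℝ × ℝ × ℝ ↦
      spheroidalSqDistDeriv ε u v σ (C q.1) (S q.1) (cos q.2.1) (sin q.2.1) (cos q.2.2) := by
    unfold spheroidalSqDistDeriv; fun_prop
  have hR'' : Continuous fun q : ℝ × ℝ × ℝ ↦
      spheroidalSqDistDeriv₂ ε u v σ (C q.1) (S q.1) (cos q.2.1) (sin q.2.1) (cos q.2.2) := by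
    unfold spheroidalSqDistDeriv₂; fun_prop
  have hd (x : ℝ) (y : ℝ × ℝ) :=
    h.hasDerivAt_spheroidalSqDist u v σ (cos y.1) (sin y.1) (cos y.2) x
  have hd' (x : ℝ) (y : ℝ × ℝ) :=
    h.hasDerivAt_spheroidalSqDistDeriv u v σ (cos y.1) (sin y.1) (cos y.2) x
  refine h.isSturmLiouvilleSolution
    (fun x hx ↦ hasDerivAt_setIntegral_mul_rpow_neg hK isOpen_Ioo hW hR hR' hd hpos _ (hsub hx))
    (fun x hx ↦ hasDerivAt_deriv_setIntegral_mul_rpow_neg hK isOpen_Ioo hW hR hR' hR'' hd hd'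
      hpos _ (hsub hx)) fun x hx ↦ ?_
  exact hP.gegenbauerPotential_ode (fun α θ ↦ hpos x (hsub (Ioo_subset_Ico_self hx)) (α, θ))
    h.sign_sq (h.cos_sq x) hσ

theorem IsGegenbauerSolution.eval_one_mul_gegenbauerPotential
    (hP : IsGegenbauerSolution m l P) (h : IsCosSinPair ε C S) (hS : ∀ x ∈ Ioo 0 b, 0 < S x)
    (hσ : σ ^ 2 = ε * ((u ^ 2 - 1) * (1 - v ^ 2)))
    (hpos : ∀ x ∈ Ioo (-b) b, ∀ y : ℝ × ℝ,
      0 < spheroidalSqDist u v σ (C x) (S x) (cos y.1) (sin y.1) (cos y.2))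
    (hP₁ : P.eval 1 ≠ 0) {x : ℝ} (hx : x ∈ Ioo 0 b) :
    P.eval 1 * gegenbauerPotential m P u v σ (C x) (S x) =
      gegenbauerPotential m P u v σ 1 0 * P.eval (C x) := by
  have hSc := h.continuous_sin
  simpa only [h.cos_zero, h.sin_zero] using
    IsSturmLiouvilleSolution.mul_eq_mul (by fun_prop) (by simp [h.sin_zero])
      (fun x hx ↦ pow_pos (hS x hx) _)
      (hP.isSturmLiouvilleSolution_gegenbauerPotential h hσ hpos)
      (hP.isSturmLiouvilleSolution h b) (by rwa [h.cos_zero]) hx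

theorem spheroidalSqDist_pos_of_lt {c s : ℝ} (hc : 1 ≤ c) (hcu : c < u)
    (hs : c ^ 2 = 1 + s ^ 2) (hσ : σ ^ 2 = (u ^ 2 - 1) * (1 - v ^ 2)) (α θ : ℝ) :
    0 < spheroidalSqDist u v σ c s (cos α) (sin α) (cos θ) := by
  have hα := cos_sq_add_sin_sq α
  have hθ := cos_sq_add_sin_sq θ
  have hsq : spheroidalSqDist u v σ c s (cos α) (sin α) (cos θ) =
      (σ - s * sin α * cos θ) ^ 2 + (s * sin α * sin θ) ^ 2 + (u * v - c * cos α) ^ 2 := by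
    unfold spheroidalSqDist
    linear_combination -hσ - s ^ 2 * sin α ^ 2 * hθ + sin α ^ 2 * hs - (c ^ 2 - 1) * hα
  have hnonneg₁ := sq_nonneg (σ - s * sin α * cos θ)
  have hnonneg₂ := sq_nonneg (s * sin α * sin θ)
  have hnonneg₃ := sq_nonneg (u * v - c * cos α)
  by_contra hle
  have h₁ : σ - s * sin α * cos θ = 0 := (pow_eq_zero_iff two_ne_zero).1 (by linarith)
  have h₂ : s * sin α * sin θ = 0 := (pow_eq_zero_iff two_ne_zero).1 (by linarith)
  have h₃ : u * v - c * cos α = 0 := (pow_eq_zero_iff two_ne_zero).1 (by linarith)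
  have hsum : u ^ 2 + v ^ 2 = c ^ 2 + cos α ^ 2 := by
    linear_combination (σ + s * sin α * cos θ) * h₁ - s * sin α * sin θ * h₂ +
      s ^ 2 * sin α ^ 2 * hθ - hσ - sin α ^ 2 * hs + (c ^ 2 - 1) * hα + (u * v + c * cos α) * h₃
  have hprod : (u ^ 2 - c ^ 2) * (u ^ 2 - cos α ^ 2) = 0 := by
    linear_combination u ^ 2 * hsum - (u * v + c * cos α) * h₃
  have hprod_pos : 0 < (u ^ 2 - c ^ 2) * (u ^ 2 - cos α ^ 2) :=
    mul_pos (by nlinarith) (by nlinarith [cos_sq_le_one α])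
  exact hprod_pos.ne' hprod

theorem spheroidalSqDist_focal_axis_pos {c : ℝ} (hu : 1 < u) (hc : c ^ 2 ≤ 1) (s α w : ℝ) :
    0 < spheroidalSqDist u 1 0 c s (cos α) (sin α) w := by
  have hα := cos_sq_le_one α
  have hcα : c * cos α ≤ 1 := by linarith [two_mul_le_add_sq c (cos α)]
  calc 0 < (u - 1) * (u + 1 - 2 * (c * cos α)) + (c - cos α) ^ 2 :=
        add_pos_of_pos_of_nonneg (mul_pos (by linarith) (by linarith)) (sq_nonneg _)
    _ = _ := by unfold spheroidalSqDist; ring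

theorem gegenbauerPotential_one_zero (m : ℕ) (P : ℝ[X]) (u v σ s : ℝ) :
    gegenbauerPotential m P u v σ 1 0 = gegenbauerPotential m P u 1 0 v s := by
  have hsq (k z w : ℝ) :
      spheroidalSqDist u v σ 1 0 k z w = spheroidalSqDist u 1 0 v s k z w := by
    unfold spheroidalSqDist; ring
  simp only [gegenbauerPotential, spheroidalKernel, hsq]

/-- Separation of variables is applied twice: first in the radial coordinate `u₀` of the source,
and then, since a source on the focal segment sees `(u, v)` only through `u` and `v`
symmetrically, in the polar coordinate `v` of the target. -/
theorem IsGegenbauerSolution.eval_one_sq_mul_gegenbauerPotential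
    (hP : IsGegenbauerSolution m l P) (hP₁ : P.eval 1 ≠ 0) {u₀ s₀ : ℝ} (hu₀ : 1 < u₀)
    (hu : u₀ < u) (hv : v ∈ Ioo (-1) 1) (hσ : σ ^ 2 = (u ^ 2 - 1) * (1 - v ^ 2))
    (hs₀ : s₀ = √(u₀ ^ 2 - 1)) :
    P.eval 1 ^ 2 * gegenbauerPotential m P u v σ u₀ s₀ =
      gegenbauerPotential m P u 1 0 1 0 * P.eval v * P.eval u₀ := by
  have hu₁ : 1 < u := hu₀.trans hu
  have hcosh_lt {x : ℝ} (hx : x ∈ Ioo (-arcosh u) (arcosh u)) : cosh x < u := by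
    rw [← cosh_arcosh hu₁.le, cosh_lt_cosh, abs_of_pos (arcosh_pos hu₁)]
    exact abs_lt.2 hx
  have hradial := hP.eval_one_mul_gegenbauerPotential isCosSinPair_cosh_sinh
    (fun x hx ↦ sinh_pos_iff.2 hx.1) (by rw [hσ, one_mul])
    (fun x hx y ↦ spheroidalSqDist_pos_of_lt (one_le_cosh x) (hcosh_lt hx) (cosh_sq' x) hσ y.1 y.2)
    hP₁ ⟨arcosh_pos hu₀, (arcosh_lt_arcosh (by linarith) (by linarith)).2 hu⟩
  have hpolar := hP.eval_one_mul_gegenbauerPotential (u := u) (v := 1) (σ := 0)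
    isCosSinPair_cos_sin (fun x hx ↦ sin_pos_of_mem_Ioo hx) (by ring)
    (fun x _ y ↦ spheroidalSqDist_focal_axis_pos hu₁ (cos_sq_le_one x) _ _ _) hP₁
    (x := arccos v) ⟨arccos_pos.2 hv.2, arccos_lt_pi.2 hv.1⟩
  rw [cosh_arcosh hu₀.le, sinh_arcosh hu₀.le, ← hs₀,
    gegenbauerPotential_one_zero m P u v σ (sin (arccos v))] at hradial
  rw [cos_arccos hv.1.le hv.2.le] at hpolar
  linear_combination P.eval 1 * hradial + P.eval u₀ * hpolar

end Separation

theorem intervalIntegral_neg_one_one_eq_integral_cos {E : Type*} [NormedAddCommGroup E]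
    [NormedSpace ℝ E] (f : ℝ → E) :
    ∫ s in (-1)..1, f s = ∫ α in Icc 0 π, sin α • f (cos α) := by
  have hcov := integral_image_eq_integral_abs_deriv_smul measurableSet_Icc
    (fun α _ ↦ (hasDerivAt_cos α).hasDerivWithinAt) injOn_cos f
  rw [bijOn_cos.image_eq] at hcov
  rw [intervalIntegral.integral_of_le (by norm_num), ← integral_Icc_eq_integral_Ioc, hcov]
  refine setIntegral_congr_fun measurableSet_Icc fun α hα ↦ ?_
  simp only [abs_neg, abs_of_nonneg (sin_nonneg_of_mem_Icc hα)]

theorem integral_sin_pow_two_mul_zero_two_pi (m : ℕ) :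
    ∫ θ in (0)..(2 * π), sin θ ^ (2 * m) =
      2 * π * (2 * m).factorial / (4 ^ m * (m.factorial : ℝ) ^ 2) := by
  induction m with
  | zero => simp
  | succ m ih =>
    rw [show 2 * (m + 1) = 2 * m + 2 by ring, integral_sin_pow, ih, Nat.factorial_succ (2 * m + 1),
      Nat.factorial_succ (2 * m), Nat.factorial_succ m]
    simp only [sin_zero, sin_two_pi]
    push_cast
    field_simp
    ring

theorem spheroidalKernel_focal {u z : ℝ} (hzu : z < u) (m : ℕ) (k w : ℝ) :
    spheroidalKernel m u 1 0 1 0 z k w = ((u - z) ^ (2 * m + 1))⁻¹ := by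
  have hpos : 0 < u - z := sub_pos.2 hzu
  have hsq : spheroidalSqDist u 1 0 1 0 z k w = (u - z) ^ 2 := by
    unfold spheroidalSqDist
    ring
  rw [spheroidalKernel, hsq, ← rpow_natCast _ 2, ← rpow_mul hpos.le, ← rpow_natCast,
    ← rpow_neg hpos.le]
  push_cast
  ring_nf

theorem gegenbauerPotential_focal {u : ℝ} (hu : 1 < u) (m : ℕ) (P : ℝ[X]) :
    gegenbauerPotential m P u 1 0 1 0 =
      2 * π * (2 * m).factorial / (4 ^ m * (m.factorial : ℝ) ^ 2) *
        ∫ s in (-1)..1, (1 - s ^ 2) ^ m * P.eval s / (u - s) ^ (2 * m + 1) := by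
  have hsplit (y : ℝ × ℝ) :
      gegenbauerWeight m P y * spheroidalKernel m u 1 0 1 0 (cos y.1) (sin y.1) (cos y.2) =
      (sin y.1 • ((1 - cos y.1 ^ 2) ^ m * P.eval (cos y.1) / (u - cos y.1) ^ (2 * m + 1))) *
        sin y.2 ^ (2 * m) := by
    rw [spheroidalKernel_focal ((cos_le_one _).trans_lt hu), gegenbauerWeight, ← sin_sq,
      smul_eq_mul]
    ring
  rw [gegenbauerPotential, ← integral_sin_pow_two_mul_zero_two_pi,
    intervalIntegral_neg_one_one_eq_integral_cos,
    intervalIntegral.integral_of_le (by positivity), ← integral_Icc_eq_integral_Ioc]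
  simp only [hsplit]
  rw [Measure.volume_eq_prod, setIntegral_prod_mul (fun α ↦ sin α •
    ((1 - cos α ^ 2) ^ m * P.eval (cos α) / (u - cos α) ^ (2 * m + 1))) (fun θ ↦ sin θ ^ (2 * m)),
    mul_comm]

section Rodrigues

variable {R : Type*} [CommRing R]

/-- The polynomials of Rodrigues' formula: `rodrigues R n n` is `2 ^ n * n !` times the Legendre
polynomial of degree `n`. -/
def rodrigues (R : Type*) [CommRing R] (n k : ℕ) : R[X] :=
  derivative^[k] ((X ^ 2 - 1) ^ n)

theorem derivative_rodrigues (n k : ℕ) : derivative (rodrigues R n k) = rodrigues R n (k + 1) :=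
  (Function.iterate_succ_apply' derivative k _).symm

theorem iterate_derivative_rodrigues (n k j : ℕ) :
    derivative^[j] (rodrigues R n k) = rodrigues R n (j + k) :=
  (Function.iterate_add_apply derivative j k _).symm

theorem sq_sub_one_mul_rodrigues_one (n : ℕ) :
    (X ^ 2 - 1) * rodrigues R n 1 = 2 * (n : R[X]) * X * rodrigues R n 0 := by
  rcases n with _ | n
  · simp [rodrigues]
  · simp only [rodrigues, Function.iterate_one, derivative_pow_succ, map_add, map_natCast, map_one,
      derivative_sub, Nat.cast_one, pow_one, derivative_X, mul_one, derivative_one, sub_zero,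
      Nat.cast_add, Function.iterate_zero, id_eq]
    ring

theorem rodrigues_rec (n k : ℕ) :
    (X ^ 2 - 1) * rodrigues R n (k + 2) +
        2 * ((k : R[X]) + 1 - (n : R[X])) * X * rodrigues R n (k + 1) =
      ((k : R[X]) + 1) * (2 * (n : R[X]) - (k : R[X])) * rodrigues R n k := by
  induction k with
  | zero =>
    have hd := congrArg derivative (sq_sub_one_mul_rodrigues_one (R := R) n)
    simp only [derivative_mul, derivative_sub, derivative_X_pow_succ, derivative_X,
      derivative_natCast, derivative_ofNat, derivative_one, derivative_rodrigues, map_add, map_one,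
      Nat.cast_one] at hd
    push_cast
    linear_combination hd
  | succ k ih =>
    have hd := congrArg derivative ih
    simp only [derivative_mul, derivative_sub, derivative_X_pow_succ, derivative_X,
      derivative_natCast, derivative_ofNat, derivative_one, derivative_rodrigues, map_add, map_one,
      Nat.cast_one] at hd
    push_cast
    linear_combination hd

theorem eval_rodrigues_eq_zero {n k : ℕ} (hk : k < n) {x : R} (hx : x ^ 2 = 1) :
    (rodrigues R n k).eval x = 0 := by
  obtain ⟨q, hq⟩ := pow_sub_dvd_iterate_derivative_pow (X ^ 2 - 1 : R[X]) n k
  simp [rodrigues, hq, hx, Nat.sub_ne_zero_of_lt hk]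

theorem eval_one_rodrigues (n m : ℕ) :
    (rodrigues R n (n + m)).eval 1 = (n + m).factorial * (2 ^ (n - m) * n.choose m) := by
  have htaylor : taylor 1 ((X ^ 2 - 1 : R[X]) ^ n) = (X + C 2) ^ n * X ^ n := by
    rw [taylor_pow, ← mul_pow, taylor_apply, C_ofNat]
    congr 1
    simp only [map_one, sub_comp, pow_comp, X_comp, one_comp]
    ring
  rw [rodrigues, ← factorial_smul_hasseDeriv, LinearMap.smul_apply, eval_smul, ← taylor_coeff,
    htaylor, add_comm n, coeff_mul_X_pow, coeff_X_add_C_pow, nsmul_eq_mul]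

theorem sq_sub_one_pow_mul_rodrigues [IsDomain R] [CharZero R] {n m : ℕ} (hm : m ≤ n) :
    (X ^ 2 - 1) ^ m * rodrigues R n (n + m) * ((n - m).factorial : R[X]) =
      ((n + m).factorial : R[X]) * rodrigues R n (n - m) := by
  induction m with
  | zero => simp [mul_comm]
  | succ m ih =>
    obtain ⟨k, rfl⟩ : ∃ k, n = m + 1 + k := ⟨n - (m + 1), by omega⟩
    have ih := ih (by omega)
    have hrec := rodrigues_rec (R := R) (m + 1 + k) k
    have hpow : (X ^ 2 - 1 : R[X]) * ((m : R[X]) * (X ^ 2 - 1) ^ (m - 1)) =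
        (m : R[X]) * (X ^ 2 - 1) ^ m := by
      rcases m with _ | m
      · simp
      · rw [Nat.add_sub_cancel]
        ring
    rw [show m + 1 + k - m = k + 1 by omega] at ih
    rw [show m + 1 + k - (m + 1) = k by omega, ← add_assoc]
    have hd := congrArg derivative ih
    simp only [derivative_mul, derivative_pow, derivative_sub, derivative_X, derivative_one,
      derivative_natCast, derivative_rodrigues, map_natCast, Nat.cast_ofNat, C_ofNat] at hd
    -- Multiplied by `X² - 1`, the differentiated identity contains `(X² - 1) D^(k+2)`, which the
    -- recursion expresses through the two lower derivatives.
    have hk : (k + 1 : R[X]) ≠ 0 := by exact_mod_cast k.succ_ne_zero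
    refine mul_left_cancel₀ hk ?_
    rw [Nat.factorial_succ k] at ih hd
    rw [Nat.factorial_succ (m + 1 + k + m)]
    push_cast at ih hd hrec ⊢
    linear_combination (X ^ 2 - 1) * hd + ((m + 1 + k + m).factorial : R[X]) * hrec -
      2 * X * (m : R[X]) * ih -
      2 * X * rodrigues R (m + 1 + k) (m + 1 + k + m) * (k + 1) * (k.factorial : R[X]) * hpow

end Rodrigues

section Legendre

/-- The Legendre polynomial of degree `n`, as a polynomial. -/
def legendrePoly (n : ℕ) : ℝ[X] :=
  C (1 / (2 ^ n * n.factorial : ℝ)) * rodrigues ℝ n n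

theorem iterate_derivative_legendrePoly (n m : ℕ) :
    derivative^[m] (legendrePoly n) =
      C (1 / (2 ^ n * n.factorial : ℝ)) * rodrigues ℝ n (n + m) := by
  rw [legendrePoly, iterate_derivative_C_mul, iterate_derivative_rodrigues, add_comm]

theorem iteratedDeriv_eval (p : ℝ[X]) (m : ℕ) :
    iteratedDeriv m (fun x ↦ p.eval x) = fun x ↦ (derivative^[m] p).eval x := by
  induction m with
  | zero => simp
  | succ m ih =>
    ext x
    rw [iteratedDeriv_succ, ih, Polynomial.deriv, Function.iterate_succ_apply']

theorem legendreP_eq_eval (n : ℕ) : legendreP n = fun x ↦ (legendrePoly n).eval x := by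
  have hrod : (fun y : ℝ ↦ (y ^ 2 - 1) ^ n) = fun y ↦ ((X ^ 2 - 1 : ℝ[X]) ^ n).eval y := by simp
  ext x
  rw [legendreP, hrod, iteratedDeriv_eval, legendrePoly, eval_C_mul, rodrigues]

theorem iteratedDeriv_legendreP (n m : ℕ) (x : ℝ) :
    iteratedDeriv m (legendreP n) x = (derivative^[m] (legendrePoly n)).eval x := by
  rw [legendreP_eq_eval, iteratedDeriv_eval]

theorem isGegenbauerSolution_legendrePoly (n m : ℕ) :
    IsGegenbauerSolution m ((n + m + 1) * (n - m)) (derivative^[m] (legendrePoly n)) := fun x ↦ by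
  have hrec := congrArg (eval x) (rodrigues_rec (R := ℝ) n (n + m))
  simp only [eval_mul, eval_add, eval_sub, eval_pow, eval_X, eval_one, eval_ofNat, eval_natCast,
    Nat.cast_add] at hrec
  simp only [iterate_derivative_legendrePoly, derivative_C_mul, derivative_rodrigues, eval_mul,
    eval_C]
  linear_combination 1 / (2 ^ n * n.factorial : ℝ) * hrec

theorem eval_one_iterate_derivative_legendrePoly {n m : ℕ} (hm : m ≤ n) :
    (derivative^[m] (legendrePoly n)).eval 1 =
      (n + m).factorial / (2 ^ m * m.factorial * (n - m).factorial) := by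
  rw [iterate_derivative_legendrePoly, eval_C_mul, eval_one_rodrigues, Nat.cast_choose ℝ hm]
  obtain ⟨k, rfl⟩ := Nat.exists_eq_add_of_le hm
  rw [Nat.add_sub_cancel_left, pow_add]
  field_simp

theorem hasDerivAt_integral_div_sub_pow {f : ℝ → ℝ} (hf : ContinuousOn f (Icc (-1) 1)) (k : ℕ)
    {x : ℝ} (hx : 1 < x) :
    HasDerivAt (fun x ↦ ∫ t in (-1)..1, f t / (x - t) ^ (k + 1))
      (-(k + 1) * ∫ t in (-1)..1, f t / (x - t) ^ (k + 2)) x := by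
  have hne {x t : ℝ} (hx : x ∈ Ioi 1) (ht : t ∈ Icc (-1 : ℝ) 1) : x - t ≠ 0 :=
    (sub_pos.2 (ht.2.trans_lt hx)).ne'
  have hderiv := hasDerivAt_setIntegral_of_isCompact (μ := volume) (K := Icc (-1) 1)
    isCompact_Icc isOpen_Ioi (F := fun x t ↦ f t / (x - t) ^ (k + 1))
    (F' := fun x t ↦ -(k + 1) * (f t / (x - t) ^ (k + 2)))
    (fun x hx ↦ hf.div (by fun_prop) fun t ht ↦ pow_ne_zero _ (hne hx ht)) ?_
    (fun x hx t ht ↦ ?_) hx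
  · simpa only [intervalIntegral.integral_of_le (show (-1 : ℝ) ≤ 1 by norm_num),
      ← integral_Icc_eq_integral_Ioc, integral_const_mul] using hderiv
  · refine continuousOn_const.mul (ContinuousOn.div ?_ (by fun_prop) fun q hq ↦
      pow_ne_zero _ (hne hq.1 hq.2))
    exact hf.comp continuousOn_snd fun q hq ↦ hq.2
  · have hpow := ((hasDerivAt_id x).sub_const t).fun_pow (k + 1)
    refine ((hasDerivAt_const x (f t)).fun_div hpow (pow_ne_zero _ (hne hx ht))).congr_deriv ?_
    have := hne hx ht
    simp only [id, Nat.add_sub_cancel]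
    push_cast
    field_simp
    ring

theorem iteratedDeriv_legendreQ (n j : ℕ) {x : ℝ} (hx : 1 < x) :
    iteratedDeriv j (legendreQ n) x =
      1 / 2 * (-1) ^ j * j.factorial * ∫ t in (-1)..1, legendreP n t / (x - t) ^ (j + 1) := by
  have hP : Continuous (legendreP n) := by
    rw [legendreP_eq_eval]
    fun_prop
  induction j generalizing x with
  | zero => simp [legendreQ]
  | succ j ih =>
    have hev : iteratedDeriv j (legendreQ n) =ᶠ[𝓝 x] fun x ↦
        1 / 2 * (-1) ^ j * j.factorial * ∫ t in (-1)..1, legendreP n t / (x - t) ^ (j + 1) := by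
      filter_upwards [Ioi_mem_nhds hx] with y hy using ih hy
    rw [iteratedDeriv_succ, hev.deriv_eq,
      ((hasDerivAt_integral_div_sub_pow hP.continuousOn j hx).const_mul _).deriv,
      Nat.factorial_succ]
    push_cast
    ring

theorem integral_derivative_div_sub_pow {p : ℝ[X]} (h₁ : p.eval 1 = 0) (h₂ : p.eval (-1) = 0)
    (k : ℕ) {u : ℝ} (hu : 1 < u) :
    ∫ s in (-1)..1, (derivative p).eval s / (u - s) ^ (k + 1) =
      -(k + 1) * ∫ s in (-1)..1, p.eval s / (u - s) ^ (k + 2) := by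
  have hne : ∀ s ∈ uIcc (-1 : ℝ) 1, u - s ≠ 0 := fun s hs ↦ by
    rw [uIcc_of_le (by norm_num)] at hs
    exact (sub_pos.2 (hs.2.trans_lt hu)).ne'
  have hint (q : ℝ[X]) (j : ℕ) :
      IntervalIntegrable (fun s ↦ q.eval s / (u - s) ^ j) volume (-1) 1 :=
    ContinuousOn.intervalIntegrable (q.continuous.continuousOn.div (by fun_prop)
      fun s hs ↦ pow_ne_zero _ (hne s hs))
  have hd : ∀ s ∈ uIcc (-1 : ℝ) 1, HasDerivAt (fun s ↦ p.eval s / (u - s) ^ (k + 1))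
      ((derivative p).eval s / (u - s) ^ (k + 1) +
        (k + 1) * (p.eval s / (u - s) ^ (k + 2))) s := fun s hs ↦ by
    have := hne s hs
    have hpow := ((hasDerivAt_id s).const_sub u).fun_pow (k + 1)
    refine ((p.hasDerivAt s).fun_div hpow (pow_ne_zero _ this)).congr_deriv ?_
    simp only [id, Nat.add_sub_cancel]
    push_cast
    field_simp
    ring
  have hftc := intervalIntegral.integral_eq_sub_of_hasDerivAt hd
    ((hint _ _).add ((hint _ _).const_mul _))
  rw [intervalIntegral.integral_add (hint _ _) ((hint _ _).const_mul _),
    intervalIntegral.integral_const_mul, h₁, h₂, zero_div, zero_div, sub_zero] at hftc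
  linear_combination hftc

theorem integral_iterate_derivative_div_sub_pow {p : ℝ[X]} {i : ℕ}
    (h₁ : ∀ j < i, (derivative^[j] p).eval 1 = 0) (h₂ : ∀ j < i, (derivative^[j] p).eval (-1) = 0)
    (k : ℕ) {u : ℝ} (hu : 1 < u) :
    (-1) ^ i * k.factorial * ∫ s in (-1)..1, (derivative^[i] p).eval s / (u - s) ^ (k + 1) =
      (k + i).factorial * ∫ s in (-1)..1, p.eval s / (u - s) ^ (k + i + 1) := by
  induction i generalizing k with
  | zero => simp
  | succ i ih =>
    have ih := ih (fun j hj ↦ h₁ j (by omega)) (fun j hj ↦ h₂ j (by omega)) (k + 1)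
    rw [Function.iterate_succ_apply',
      integral_derivative_div_sub_pow (h₁ i i.lt_succ_self) (h₂ i i.lt_succ_self) k hu]
    rw [Nat.factorial_succ, add_right_comm k 1 i, add_assoc k i 1] at ih
    push_cast at ih
    linear_combination ih

theorem one_sub_sq_pow_mul_iterate_derivative_legendrePoly {n m : ℕ} (hm : m ≤ n) (s : ℝ) :
    (1 - s ^ 2) ^ m * (derivative^[m] (legendrePoly n)).eval s =
      (-1) ^ m * ((n + m).factorial / (n - m).factorial) *
        (C (1 / (2 ^ n * n.factorial : ℝ)) * rodrigues ℝ n (n - m)).eval s := by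
  have hsym := congrArg (eval s) (sq_sub_one_pow_mul_rodrigues (R := ℝ) hm)
  simp only [eval_mul, eval_sub, eval_pow, eval_X, eval_one, eval_natCast] at hsym
  rw [iterate_derivative_legendrePoly, ← neg_sub, neg_pow, eval_C_mul, eval_C_mul]
  field_simp
  linear_combination hsym

theorem integral_legendrePoly_div_sub_pow {n m : ℕ} (hm : m ≤ n) {u : ℝ} (hu : 1 < u) :
    (n - m).factorial * (2 * m).factorial *
        ∫ s in (-1)..1, (1 - s ^ 2) ^ m * (derivative^[m] (legendrePoly n)).eval s /
          (u - s) ^ (2 * m + 1) =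
      2 * (-1) ^ m * (n + m).factorial * iteratedDeriv m (legendreQ n) u := by
  set p := C (1 / (2 ^ n * n.factorial : ℝ)) * rodrigues ℝ n (n - m) with hp
  have hvanish (x : ℝ) (hx : x ^ 2 = 1) : ∀ j < m, (derivative^[j] p).eval x = 0 := fun j hj ↦ by
    rw [hp, iterate_derivative_C_mul, iterate_derivative_rodrigues, eval_C_mul,
      eval_rodrigues_eq_zero (by omega) hx, mul_zero]
  have hlegendre : derivative^[m] p = legendrePoly n := by
    rw [hp, iterate_derivative_C_mul, iterate_derivative_rodrigues, legendrePoly,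
      Nat.add_sub_cancel' hm]
  have hparts := integral_iterate_derivative_div_sub_pow (hvanish 1 (by norm_num))
    (hvanish (-1) (by norm_num)) m hu
  rw [hlegendre, ← two_mul] at hparts
  simp only [one_sub_sq_pow_mul_iterate_derivative_legendrePoly hm, mul_div_assoc,
    intervalIntegral.integral_const_mul, iteratedDeriv_legendreQ n m hu, legendreP_eq_eval]
  field_simp
  linear_combination -hparts

theorem gegenbauerPotential_legendrePoly_focal {n m : ℕ} (hm : m ≤ n) {u : ℝ} (hu : 1 < u) :
    gegenbauerPotential m (derivative^[m] (legendrePoly n)) u 1 0 1 0 =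
      (derivative^[m] (legendrePoly n)).eval 1 ^ 2 * (4 * π * (-1) ^ m *
        ((n - m).factorial / (n + m).factorial) * iteratedDeriv m (legendreQ n) u) := by
  have hQ := integral_legendrePoly_div_sub_pow hm hu
  rw [gegenbauerPotential_focal hu, eval_one_iterate_derivative_legendrePoly hm,
    show (4 : ℝ) ^ m = 2 ^ m * 2 ^ m by rw [← mul_pow]; norm_num]
  field_simp
  linear_combination 2 * hQ

theorem gegenbauerPotential_legendrePoly {n m : ℕ} (hm : m ≤ n) {u v σ u₀ s₀ : ℝ} (hu₀ : 1 < u₀)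
    (hu : u₀ < u) (hv : v ∈ Ioo (-1) 1) (hσ : σ ^ 2 = (u ^ 2 - 1) * (1 - v ^ 2))
    (hs₀ : s₀ = √(u₀ ^ 2 - 1)) :
    gegenbauerPotential m (derivative^[m] (legendrePoly n)) u v σ u₀ s₀ =
      4 * π * (-1) ^ m * ((n - m).factorial / (n + m).factorial) *
        iteratedDeriv m (legendreQ n) u * iteratedDeriv m (legendreP n) v *
        iteratedDeriv m (legendreP n) u₀ := by
  have hP₁ : (derivative^[m] (legendrePoly n)).eval 1 ≠ 0 := by
    rw [eval_one_iterate_derivative_legendrePoly hm]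
    positivity
  have hsep := (isGegenbauerSolution_legendrePoly n m).eval_one_sq_mul_gegenbauerPotential hP₁ hu₀
    hu hv hσ hs₀
  rw [gegenbauerPotential_legendrePoly_focal hm (hu₀.trans hu)] at hsep
  refine mul_left_cancel₀ (pow_ne_zero 2 hP₁) (hsep.trans ?_)
  rw [iteratedDeriv_legendreP, iteratedDeriv_legendreP]
  ring

end Legendre

section SingleLayer

theorem integral_spheroidalSqDist_rpow_mul_exp {u v σ c s k z : ℝ}
    (hpos : ∀ θ, 0 < spheroidalSqDist u v σ c s k z (cos θ)) (m : ℕ) (φ : ℝ) :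
    ∫ t in (0)..(2 * π), ((spheroidalSqDist u v σ c s k z (cos (t - φ)) ^ (-(1 / 2) : ℝ) : ℝ) : ℂ) *
        Complex.exp (Complex.I * m * t) =
      Complex.exp (Complex.I * m * φ) * (((σ * s * z) ^ m *
        ∫ θ in (0)..(2 * π), sin θ ^ (2 * m) * spheroidalKernel m u v σ c s k z (cos θ) : ℝ) :
          ℂ) := by
  have hlin (w : ℝ) : spheroidalSqDist u v σ c s k z w =
      u ^ 2 + v ^ 2 + c ^ 2 + k ^ 2 - 2 - 2 * u * v * c * k - 2 * (σ * s * z) * w := by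
    rw [spheroidalSqDist]
    ring
  simp only [hlin, spheroidalKernel] at hpos ⊢
  set A := u ^ 2 + v ^ 2 + c ^ 2 + k ^ 2 - 2 - 2 * u * v * c * k
  set B := 2 * (σ * s * z) with hB
  have hAB : |B| < A := by
    have h0 := hpos 0
    have hπ := hpos π
    rw [cos_zero] at h0
    rw [cos_pi] at hπ
    exact abs_lt.2 ⟨by linarith, by linarith⟩
  have hcont : ContinuousOn (fun w ↦ (A - B * w) ^ (-(1 / 2) : ℝ)) (Icc (-1) 1) :=
    ContinuousOn.rpow_const (by fun_prop) fun w hw ↦ Or.inl (sub_mul_pos_of_abs_lt hAB hw).ne'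
  rw [integral_comp_cos_sub_mul_exp hcont, integral_cos_mul_rpow_sub_mul_cos m hAB, hB,
    mul_div_cancel_left₀ _ two_ne_zero]

variable {a u v u₀ φ : ℝ}

theorem norm_prolate_sub_prolate_cos (ha : 0 ≤ a) (hu : 1 ≤ u) (hv : v ∈ Icc (-1) 1)
    (hu₀ : 1 ≤ u₀) {α : ℝ} (hα : α ∈ Icc 0 π) (φ t : ℝ) :
    ‖prolate a u v φ - prolate a u₀ (cos α) t‖ =
      a * √(spheroidalSqDist u v (√(u ^ 2 - 1) * √(1 - v ^ 2)) u₀ √(u₀ ^ 2 - 1) (cos α) (sin α)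
        (cos (t - φ))) := by
  have hsu : √(u ^ 2 - 1) ^ 2 = u ^ 2 - 1 := sq_sqrt (by nlinarith)
  have hsv : √(1 - v ^ 2) ^ 2 = 1 - v ^ 2 := sq_sqrt (by nlinarith [hv.1, hv.2])
  have hsu₀ : √(u₀ ^ 2 - 1) ^ 2 = u₀ ^ 2 - 1 := sq_sqrt (by nlinarith)
  have hsin : √(1 - cos α ^ 2) = sin α := by
    rw [← sin_sq, sqrt_sq (sin_nonneg_of_mem_Icc hα)]
  rw [EuclideanSpace.norm_eq, ← sqrt_sq ha, ← sqrt_mul (sq_nonneg a), sqrt_sq ha]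
  congr 1
  simp only [prolate, WithLp.equiv_symm_apply, hsin, PiLp.sub_apply, norm_eq_abs, sq_abs,
    Fin.sum_univ_three, Fin.isValue, Matrix.cons_val_zero, Matrix.cons_val_one, Matrix.cons_val,
    spheroidalSqDist, cos_sub]
  linear_combination a ^ 2 * (√(u ^ 2 - 1) ^ 2 * √(1 - v ^ 2) ^ 2 * cos_sq_add_sin_sq φ +
    √(u₀ ^ 2 - 1) ^ 2 * sin α ^ 2 * cos_sq_add_sin_sq t + √(1 - v ^ 2) ^ 2 * hsu +
    (u ^ 2 - 1) * hsv + sin α ^ 2 * hsu₀ + (u₀ ^ 2 - 1) * cos_sq_add_sin_sq α)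

theorem sqrt_sq_sub_one_mul_sqrt_one_sub_sq_sq (hu : 1 ≤ u) (hv : v ∈ Icc (-1) 1) :
    (√(u ^ 2 - 1) * √(1 - v ^ 2)) ^ 2 = (u ^ 2 - 1) * (1 - v ^ 2) := by
  rw [mul_pow, sq_sqrt (by nlinarith), sq_sqrt (by nlinarith [hv.1, hv.2])]

theorem spheroidalSqDist_sqrt_pos (hu₀ : 1 ≤ u₀) (hu : u₀ < u) (hv : v ∈ Icc (-1) 1) (α θ : ℝ) :
    0 < spheroidalSqDist u v (√(u ^ 2 - 1) * √(1 - v ^ 2)) u₀ √(u₀ ^ 2 - 1) (cos α) (sin α)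
      (cos θ) := by
  refine spheroidalSqDist_pos_of_lt hu₀ hu ?_
    (sqrt_sq_sub_one_mul_sqrt_one_sub_sq_sq (hu₀.trans hu.le) hv) α θ
  rw [sq_sqrt (by nlinarith)]
  ring

theorem singleLayerP_const_mul (a u₀ : ℝ) (z : ℂ) (τ : ℝ → ℝ → ℂ) (x : EuclideanSpace ℝ (Fin 3)) :
    singleLayerP a u₀ (fun s t ↦ z * τ s t) x = z * singleLayerP a u₀ τ x := by
  simp only [singleLayerP, mul_left_comm _ z, intervalIntegral.integral_const_mul]

theorem singleLayerP_div_sqrt (ha : 0 < a) (hu₀ : 1 < u₀) (hu : u₀ < u) (hv : v ∈ Icc (-1) 1)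
    (φ : ℝ) (τ : ℝ → ℝ → ℂ) :
    singleLayerP a u₀ (fun s t ↦ τ s t / (√(u₀ ^ 2 - s ^ 2) : ℝ)) (prolate a u v φ) =
      ((a * √(u₀ ^ 2 - 1) / (4 * π) : ℝ) : ℂ) * ∫ t in (0)..(2 * π), ∫ α in Icc 0 π,
        ((sin α * spheroidalSqDist u v (√(u ^ 2 - 1) * √(1 - v ^ 2)) u₀ √(u₀ ^ 2 - 1) (cos α)
          (sin α) (cos (t - φ)) ^ (-(1 / 2) : ℝ) : ℝ) : ℂ) * τ (cos α) t := by
  rw [singleLayerP, ← intervalIntegral.integral_const_mul]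
  refine intervalIntegral.integral_congr fun t _ ↦ ?_
  beta_reduce
  rw [intervalIntegral_neg_one_one_eq_integral_cos, ← integral_const_mul]
  refine setIntegral_congr_fun measurableSet_Icc fun α hα ↦ ?_
  have hpos := spheroidalSqDist_sqrt_pos hu₀.le hu hv α (t - φ)
  have hsqrt : √(u₀ ^ 2 - cos α ^ 2) ≠ 0 :=
    (sqrt_pos.2 (by nlinarith [cos_sq_le_one α])).ne'
  simp only [norm_prolate_sub_prolate_cos ha.le (hu₀.trans hu).le hv hu₀.le hα, areaElemP,
    rpow_neg hpos.le, ← sqrt_eq_rpow, Complex.real_smul]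
  have hsqrt' : ((√(u₀ ^ 2 - cos α ^ 2) : ℝ) : ℂ) ≠ 0 := Complex.ofReal_ne_zero.2 hsqrt
  have ha' : (a : ℂ) ≠ 0 := Complex.ofReal_ne_zero.2 ha.ne'
  push_cast
  field_simp

theorem integral_gegenbauer_mul_spheroidalSqDist_rpow_mul_exp {u v σ c s α : ℝ}
    (hpos : ∀ θ, 0 < spheroidalSqDist u v σ c s (cos α) (sin α) (cos θ)) (m : ℕ) (P : ℝ[X])
    (φ : ℝ) :
    ∫ t in Icc 0 (2 * π),
        ((sin α * spheroidalSqDist u v σ c s (cos α) (sin α) (cos (t - φ)) ^ (-(1 / 2) : ℝ) : ℝ) :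
          ℂ) * (((sin α ^ m * P.eval (cos α) : ℝ) : ℂ) * Complex.exp (Complex.I * m * t)) =
      ((∫ θ in Icc 0 (2 * π), gegenbauerWeight m P (α, θ) *
        spheroidalKernel m u v σ c s (cos α) (sin α) (cos θ) : ℝ) : ℂ) *
          (((σ * s) ^ m : ℝ) * Complex.exp (Complex.I * m * φ)) := by
  calc
    _ = ∫ t in Icc 0 (2 * π), ((sin α ^ (m + 1) * P.eval (cos α) : ℝ) : ℂ) *
          (((spheroidalSqDist u v σ c s (cos α) (sin α) (cos (t - φ)) ^ (-(1 / 2) : ℝ) : ℝ) : ℂ) *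
            Complex.exp (Complex.I * m * t)) := by
        congr with t
        push_cast
        ring
    _ = ((sin α ^ (m + 1) * P.eval (cos α) * (σ * s * sin α) ^ m * ∫ θ in Icc 0 (2 * π),
          sin θ ^ (2 * m) * spheroidalKernel m u v σ c s (cos α) (sin α) (cos θ) : ℝ) : ℂ) *
            Complex.exp (Complex.I * m * φ) := by
        rw [integral_const_mul, integral_Icc_eq_integral_Ioc, integral_Icc_eq_integral_Ioc,
          ← intervalIntegral.integral_of_le two_pi_pos.le,
          ← intervalIntegral.integral_of_le two_pi_pos.le,
          integral_spheroidalSqDist_rpow_mul_exp hpos]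
        push_cast
        ring
    _ = _ := by
        simp only [gegenbauerWeight, mul_assoc, integral_const_mul]
        push_cast
        ring

theorem integral_integral_spheroidalSqDist_rpow_mul_exp {u v σ c s : ℝ}
    (hpos : ∀ α θ, 0 < spheroidalSqDist u v σ c s (cos α) (sin α) (cos θ)) (m : ℕ) (P : ℝ[X])
    (φ : ℝ) :
    ∫ t in (0)..(2 * π), ∫ α in Icc 0 π,
        ((sin α * spheroidalSqDist u v σ c s (cos α) (sin α) (cos (t - φ)) ^ (-(1 / 2) : ℝ) : ℝ) :
          ℂ) * (((sin α ^ m * P.eval (cos α) : ℝ) : ℂ) * Complex.exp (Complex.I * m * t)) =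
      (((σ * s) ^ m * gegenbauerPotential m P u v σ c s : ℝ) : ℂ) *
        Complex.exp (Complex.I * m * φ) := by
  have hcont : Continuous fun p : ℝ × ℝ ↦
      spheroidalSqDist u v σ c s (cos p.2) (sin p.2) (cos (p.1 - φ)) ^ (-(1 / 2) : ℝ) :=
    (continuous_spheroidalSqDist_angles_rpow hpos (-(1 / 2))).comp
      (f := fun p : ℝ × ℝ ↦ (p.2, p.1 - φ)) (by fun_prop)
  rw [intervalIntegral.integral_of_le two_pi_pos.le, ← integral_Icc_eq_integral_Ioc,
    integral_integral_swap]
  · simp only [integral_gegenbauer_mul_spheroidalSqDist_rpow_mul_exp (hpos _)]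
    rw [integral_mul_const, integral_complex_ofReal, gegenbauerPotential, Measure.volume_eq_prod,
      setIntegral_prod]
    · push_cast
      ring
    · exact ((continuous_gegenbauerWeight m P).mul
        (continuous_spheroidalSqDist_angles_rpow hpos _)).continuousOn.integrableOn_compact
          (isCompact_Icc.prod isCompact_Icc)
  · rw [Measure.prod_restrict]
    refine ContinuousOn.integrableOn_compact (isCompact_Icc.prod isCompact_Icc) ?_
    simp only [Function.uncurry_def]
    fun_prop

theorem singleLayerP_gegenbauer_div_sqrt (ha : 0 < a) (hu₀ : 1 < u₀) (hu : u₀ < u)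
    (hv : v ∈ Icc (-1) 1) (φ : ℝ) (N : ℂ) (m : ℕ) (P : ℝ[X]) :
    singleLayerP a u₀ (fun s t ↦ N * (((√(1 - s ^ 2) ^ m * P.eval s : ℝ) : ℂ) *
        Complex.exp (Complex.I * m * t)) / (√(u₀ ^ 2 - s ^ 2) : ℝ)) (prolate a u v φ) =
      N * (((a * √(u₀ ^ 2 - 1) / (4 * π) * (√(u ^ 2 - 1) * √(1 - v ^ 2) * √(u₀ ^ 2 - 1)) ^ m *
        gegenbauerPotential m P u v (√(u ^ 2 - 1) * √(1 - v ^ 2)) u₀ √(u₀ ^ 2 - 1) : ℝ) : ℂ) *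
          Complex.exp (Complex.I * m * φ)) := by
  have hsin {α : ℝ} (hα : α ∈ Icc 0 π) : √(1 - cos α ^ 2) = sin α := by
    rw [← sin_sq, sqrt_sq (sin_nonneg_of_mem_Icc hα)]
  simp only [mul_div_assoc N, singleLayerP_const_mul]
  rw [singleLayerP_div_sqrt ha hu₀ hu hv, mul_assoc (a * _ / _), Complex.ofReal_mul, mul_assoc,
    ← integral_integral_spheroidalSqDist_rpow_mul_exp (spheroidalSqDist_sqrt_pos hu₀.le hu hv)]
  congr 2
  refine intervalIntegral.integral_congr fun t _ ↦
    setIntegral_congr_fun measurableSet_Icc fun α hα ↦ ?_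
  simp only [hsin hα]

theorem sphY_eq (n m : ℕ) (v φ : ℝ) :
    sphY n m v φ = ((√((2 * n + 1) / (4 * π)) * √((n - m).factorial / (n + m).factorial) : ℝ) : ℂ) *
      (((√(1 - v ^ 2) ^ m * (derivative^[m] (legendrePoly n)).eval v : ℝ) : ℂ) *
        Complex.exp (Complex.I * m * φ)) := by
  rw [sphY, ferrersP, iteratedDeriv_legendreP, Complex.ofReal_mul, mul_assoc]

end SingleLayer

end

theorem singleLayer_exterior_eval (a : ℝ) (ha : 0 < a) (u₀ : ℝ) (hu₀ : 1 < u₀)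
    (n m : ℕ) (hm : m ≤ n) (u v φ : ℝ) (hu : u₀ < u) (hv : v ∈ Set.Ioo (-1 : ℝ) 1) :
    singleLayerP a u₀ (fun s t => sphY n m s t / ((Real.sqrt (u₀ ^ 2 - s ^ 2) : ℝ) : ℂ))
        (prolate a u v φ) =
      ((a * (((n - m).factorial : ℝ) / ((n + m).factorial : ℝ)) * (-1 : ℝ) ^ m *
          Real.sqrt (u₀ ^ 2 - 1) * assocP n m u₀ * assocQ n m u : ℝ) : ℂ) * sphY n m v φ := by
  have hv' : v ∈ Set.Icc (-1 : ℝ) 1 := Set.Ioo_subset_Icc_self hv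
  have hσ := sqrt_sq_sub_one_mul_sqrt_one_sub_sq_sq (hu₀.trans hu).le hv'
  simp only [sphY_eq]
  rw [singleLayerP_gegenbauer_div_sqrt ha hu₀ hu hv',
    gegenbauerPotential_legendrePoly hm hu₀ hu hv hσ rfl, ← iteratedDeriv_legendreP,
    mul_left_comm (Complex.ofReal (_ * assocQ n m u)),
    ← mul_assoc (Complex.ofReal (_ * assocQ n m u)), ← Complex.ofReal_mul, assocP, assocQ]
  congr 3
  field_simp
  ring
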